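/- The D'(m|n)-module F = ⊕_{a∈ℤ} F_a is faithful (its annihilator in D'(m|n) is zero), and any central element z ∈ Z(U(gl(m|n))) that annihilates ⊕_{λ∈AW_{m|n}} M(λ) is zero, where AW_{m|n} is the set of typical antidominant gl(m|n)-weights λ with λ_i ∉ ℤ for all i∈I. -/

import Mathlib

set_option maxHeartbeats 1000000
set_option synthInstance.maxHeartbeats 400000

noncomputable section
open scoped TensorProduct

/-- The index set `I = {1,…,m,1̄,…,n̄}` of `gl(m|n)`; `Sum.inl` are the even
(unbarred) indices, `Sum.inr` the odd (barred) ones.  The index set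
`Î = {0} ∪ I` of `gl(m+1|n)` is realized as `Ind (m+1) n`, with `0 = Sum.inl 0`. -/
abbrev Ind (m n : ℕ) := Fin m ⊕ Fin n

/-- Parity of an index, as `0` or `1`. -/
def pI {m n : ℕ} : Ind m n → ℕ := Sum.elim (fun _ => 0) (fun _ => 1)

/-- The total order `1 < ⋯ < m < 1̄ < ⋯ < n̄` on `I` (and, with `m+1` in place of `m`,
the order `0 < 1 < ⋯ < m < 1̄ < ⋯ < n̄` on `Î`). -/
def iltI {m n : ℕ} : Ind m n → Ind m n → Prop
  | Sum.inl a, Sum.inl b => a < b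
  | Sum.inl _, Sum.inr _ => True
  | Sum.inr _, Sum.inl _ => False
  | Sum.inr a, Sum.inr b => a < b

/-- The distinguished index `0` of `Î`. -/
def z0 {m n : ℕ} : Ind (m+1) n := Sum.inl 0

/-- The inclusion `I ↪ Î`. -/
def emb {m n : ℕ} : Ind m n → Ind (m+1) n := Sum.map Fin.succ id

lemma emb_injective {m n : ℕ} : Function.Injective (emb (m := m) (n := n)) := by
  intro a b h
  cases a <;> cases b <;> simp [emb, Fin.succ_inj] at h <;> simp [h]

lemma emb_ne_z0 {m n : ℕ} (a : Ind m n) : emb a ≠ z0 := by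
  cases a <;> simp [emb, z0, Fin.succ_ne_zero]

/-- Builds a linear map out of a space with basis `α` from a function on basis vectors. -/
def mkOp {α M : Type} [AddCommGroup M] [Module ℂ M] (g : α → M) : (α →₀ ℂ) →ₗ[ℂ] M :=
  Finsupp.lsum ℂ fun x => LinearMap.toSpanSingleton ℂ M (g x)

/-- Number of odd variables occurring before position `i`. -/
def cntB {n : ℕ} (b : Fin n → Bool) (i : Fin n) : ℕ :=
  (Finset.univ.filter fun j => j < i ∧ b j = true).card

/-- Number of odd variables occurring. -/
def cntA {n : ℕ} (b : Fin n → Bool) : ℕ := (Finset.univ.filter fun j => b j = true).card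


/-- The defining (super-)commutation relations of `gl`:
`e_ij e_kl − (−1)^{(|i|+|j|)(|k|+|l|)} e_kl e_ij = δ_jk e_il − (−1)^{(|i|+|j|)(|k|+|l|)} δ_li e_kj`. -/
inductive glRel (ι : Type) (p : ι → ℕ) [DecidableEq ι] :
    FreeAlgebra ℂ (ι × ι) → FreeAlgebra ℂ (ι × ι) → Prop
  | basic (i j k l : ι) : glRel ι p
      (FreeAlgebra.ι ℂ (i, j) * FreeAlgebra.ι ℂ (k, l)
        - ((-1 : ℂ) ^ ((p i + p j) * (p k + p l))) •
            (FreeAlgebra.ι ℂ (k, l) * FreeAlgebra.ι ℂ (i, j)))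
      ((if j = k then FreeAlgebra.ι ℂ (i, l) else 0)
        - ((-1 : ℂ) ^ ((p i + p j) * (p k + p l))) •
            (if l = i then FreeAlgebra.ι ℂ (k, j) else 0))

/-- The universal enveloping superalgebra of the general linear Lie superalgebra with
index set `ι` and parity `p`, presented by generators `e_ij` and the super-commutator
relations. -/
abbrev UEA (ι : Type) (p : ι → ℕ) [DecidableEq ι] : Type := RingQuot (glRel ι p)

/-- The generator `e_ij` of `UEA ι p`. -/
def gen {ι : Type} (p : ι → ℕ) [DecidableEq ι] (i j : ι) : UEA ι p :=
  RingQuot.mkAlgHom ℂ (glRel ι p) (FreeAlgebra.ι ℂ (i, j))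

/-- Monomials `t_0^{k} t^e t̄^b` of `F = ℂ[t_0^{±1},t_1,…,t_m] ⊗ Λ_n`. -/
abbrev FMon (m n : ℕ) := ℤ × (Fin m → ℕ) × (Fin n → Bool)

/-- `F = ℂ[t_0^{±1},t_1,…,t_m] ⊗ Λ_n` as the vector space with basis the monomials. -/
abbrev FSp (m n : ℕ) : Type := FMon m n →₀ ℂ

/-- The basis monomial of `F` attached to `x`. -/
def fmono {m n : ℕ} (x : FMon m n) : FSp m n := Finsupp.single x 1

/-- Left multiplication by `t_i/t_0` for an even index `i ∈ {1,…,m}`. -/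
def opDivE {m n : ℕ} (i : Fin m) : Module.End ℂ (FSp m n) :=
  mkOp fun x => fmono (x.1 - 1, Function.update x.2.1 i (x.2.1 i + 1), x.2.2)

/-- Left multiplication by `t_ī/t_0` for an odd index `ī`. -/
def opDivO {m n : ℕ} (i : Fin n) : Module.End ℂ (FSp m n) :=
  mkOp fun x => if x.2.2 i then 0 else
    ((-1 : ℂ) ^ (cntB x.2.2 i)) • fmono (x.1 - 1, x.2.1, Function.update x.2.2 i true)

/-- The operator `t_0 ∂_0`. -/
def opPar0 {m n : ℕ} : Module.End ℂ (FSp m n) :=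
  mkOp fun x => (x.1 : ℂ) • fmono x

/-- The operator `t_0 ∂_i` for an even index `i ∈ {1,…,m}`. -/
def opParE {m n : ℕ} (i : Fin m) : Module.End ℂ (FSp m n) :=
  mkOp fun x => (x.2.1 i : ℂ) • fmono (x.1 + 1, Function.update x.2.1 i (x.2.1 i - 1), x.2.2)

/-- The operator `t_0 ∂_ī` for an odd index `ī`. -/
def opParO {m n : ℕ} (i : Fin n) : Module.End ℂ (FSp m n) :=
  mkOp fun x => if x.2.2 i then
    ((-1 : ℂ) ^ (cntB x.2.2 i)) • fmono (x.1 + 1, x.2.1, Function.update x.2.2 i false) else 0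

/-- The multiplication operators `t_i/t_0`, `i ∈ I`. -/
def opDiv {m n : ℕ} : Ind m n → Module.End ℂ (FSp m n) := Sum.elim opDivE opDivO

/-- The operators `t_0 ∂_i`, `i ∈ Î`. -/
def opPar {m n : ℕ} : Ind (m+1) n → Module.End ℂ (FSp m n) :=
  Sum.elim (Fin.cases opPar0 opParE) opParO

/-- The multiplication operators `t_i/t_0` for `i ∈ Î` (equal to `1` for `i = 0`). -/
def opDivB {m n : ℕ} : Ind (m+1) n → Module.End ℂ (FSp m n) :=
  Sum.elim (Fin.cases 1 opDivE) opDivO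

/-- The generators of `D'(m|n)`. -/
def Dgens (m n : ℕ) : Set (Module.End ℂ (FSp m n)) := Set.range opDiv ∪ Set.range opPar

/-- The superalgebra `D'(m|n)` of differential operators on `F`, i.e. the subalgebra of
operators on `F` generated by `t_i/t_0` (`i ∈ I`) and `t_0∂_i` (`i ∈ Î`). -/
def Dprime (m n : ℕ) : Subalgebra ℂ (Module.End ℂ (FSp m n)) := Algebra.adjoin ℂ (Dgens m n)

/-- `t_i/t_0` as an element of `D'(m|n)`. -/
def tdiv {m n : ℕ} (i : Ind m n) : Dprime m n :=
  ⟨opDiv i, Algebra.subset_adjoin (Or.inl ⟨i, rfl⟩)⟩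

/-- `t_0∂_i` as an element of `D'(m|n)`. -/
def tpar {m n : ℕ} (i : Ind (m+1) n) : Dprime m n :=
  ⟨opPar i, Algebra.subset_adjoin (Or.inr ⟨i, rfl⟩)⟩

/-- `t_i/t_0` for `i ∈ Î` as an element of `D'(m|n)`. -/
def tdivB {m n : ℕ} : Ind (m+1) n → Dprime m n :=
  Sum.elim (Fin.cases 1 fun i => tdiv (Sum.inl i)) fun i => tdiv (Sum.inr i)

/-- The operator `t_a∂_b = (t_a/t_0)(t_0∂_b)` of `D'(m|n)`, for `a, b ∈ Î`. -/
def tdel {m n : ℕ} (a b : Ind (m+1) n) : Dprime m n := tdivB a * tpar b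

/-- The Euler operator `E = Σ_{i∈Î} t_i∂_i ∈ D'(m|n)`. -/
def En (m n : ℕ) : Dprime m n := ∑ i : Ind (m+1) n, tdel i i

noncomputable instance instDprimeRing (m n : ℕ) : Ring (Dprime m n) :=
  @Subalgebra.toRing ℂ (Module.End ℂ (FSp m n)) inferInstance inferInstance inferInstance _

noncomputable instance instDprimeAlgebra (m n : ℕ) : Algebra ℂ (Dprime m n) :=
  @Subalgebra.algebra ℂ (Module.End ℂ (FSp m n)) inferInstance inferInstance inferInstance _

/-- Monomials of the `D'(m|n)`-module `F_a`: such a monomial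
`t_0^{a−k_1−⋯−k_{n̄}} t_1^{k_1}⋯t_m^{k_m} t_{1̄}^{k_{1̄}}⋯t_{n̄}^{k_{n̄}}` is determined by the
exponents `(k_1,…,k_m,k_{1̄},…,k_{n̄})`. -/
abbrev FaMon (m n : ℕ) := (Fin m → ℕ) × (Fin n → Bool)

/-- The module `F_a`, as the vector space with basis its monomials. -/
abbrev FaSp (m n : ℕ) : Type := FaMon m n →₀ ℂ

/-- A basis monomial of `F_a`. -/
def amono {m n : ℕ} (x : FaMon m n) : FaSp m n := Finsupp.single x 1

/-- The parity of a monomial of `F_a`. -/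
def parM {m n : ℕ} (x : FaMon m n) : ℕ := cntA x.2

/-- The monomial `t_0^a` of `F_a`. -/
def hwMon (m n : ℕ) : FaMon m n := (fun _ => 0, fun _ => false)

/-- Multiplication by `t_i/t_0` on `F_a`, even `i`. -/
def aDivE {m n : ℕ} (i : Fin m) : Module.End ℂ (FaSp m n) :=
  mkOp fun x => amono (Function.update x.1 i (x.1 i + 1), x.2)

/-- Multiplication by `t_ī/t_0` on `F_a`, odd `ī`. -/
def aDivO {m n : ℕ} (i : Fin n) : Module.End ℂ (FaSp m n) :=
  mkOp fun x => if x.2 i then 0 else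
    ((-1 : ℂ) ^ (cntB x.2 i)) • amono (x.1, Function.update x.2 i true)

/-- The operator `t_0∂_0` on `F_a` (the exponent of `t_0` is `a` minus the total degree of the
other variables). -/
def aPar0 {m n : ℕ} (a : ℂ) : Module.End ℂ (FaSp m n) :=
  mkOp fun x => (a - (∑ i, (x.1 i : ℂ)) - (cntA x.2 : ℂ)) • amono x

/-- The operator `t_0∂_i` on `F_a`, even `i`. -/
def aParE {m n : ℕ} (i : Fin m) : Module.End ℂ (FaSp m n) :=
  mkOp fun x => (x.1 i : ℂ) • amono (Function.update x.1 i (x.1 i - 1), x.2)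

/-- The operator `t_0∂_ī` on `F_a`, odd `ī`. -/
def aParO {m n : ℕ} (i : Fin n) : Module.End ℂ (FaSp m n) :=
  mkOp fun x => if x.2 i then
    ((-1 : ℂ) ^ (cntB x.2 i)) • amono (x.1, Function.update x.2 i false) else 0

/-- `t_i/t_0` on `F_a` for `i ∈ I`. -/
def aDiv {m n : ℕ} : Ind m n → Module.End ℂ (FaSp m n) := Sum.elim aDivE aDivO

/-- `t_0∂_i` on `F_a` for `i ∈ Î`. -/
def aParB {m n : ℕ} (a : ℂ) : Ind (m+1) n → Module.End ℂ (FaSp m n) :=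
  Sum.elim (Fin.cases (aPar0 a) aParE) aParO

/-- `t_i/t_0` on `F_a` for `i ∈ Î`. -/
def aDivB {m n : ℕ} : Ind (m+1) n → Module.End ℂ (FaSp m n) :=
  Sum.elim (Fin.cases 1 aDivE) aDivO

/-- The operator `t_i∂_j` on `F_a`, `i, j ∈ Î`. -/
def aTD {m n : ℕ} (a : ℂ) (i j : Ind (m+1) n) : Module.End ℂ (FaSp m n) :=
  aDivB i * aParB a j

/-- The simple highest weight module `L(λ)` over `U(gl(m|n))`: a simple module with a
(nonzero) highest weight vector of weight `λ`. -/
structure SimpleHW (m n : ℕ) (lam : Ind m n → ℂ) where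
  L : Type
  [acg : AddCommGroup L]
  [mod : Module ℂ L]
  ρ : UEA (Ind m n) pI →ₐ[ℂ] Module.End ℂ L
  v : L
  v_ne : v ≠ 0
  hw : ∀ i j : Ind m n, iltI i j → ρ (gen pI i j) v = 0
  hwt : ∀ i : Ind m n, ρ (gen pI i i) v = lam i • v
  simple : ∀ N : Submodule ℂ L, (∀ u x, x ∈ N → ρ u x ∈ N) → N = ⊥ ∨ N = ⊤

attribute [instance] SimpleHW.acg SimpleHW.mod

/-- The Verma module `M(λ)` over `U(gl(m|n))`: a module generated by a highest weight vector
of weight `λ` which is universal among such. -/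
structure VermaM (m n : ℕ) (lam : Ind m n → ℂ) where
  L : Type
  [acg : AddCommGroup L]
  [mod : Module ℂ L]
  ρ : UEA (Ind m n) pI →ₐ[ℂ] Module.End ℂ L
  v : L
  v_ne : v ≠ 0
  hw : ∀ i j : Ind m n, iltI i j → ρ (gen pI i j) v = 0
  hwt : ∀ i : Ind m n, ρ (gen pI i i) v = lam i • v
  gens : ∀ N : Submodule ℂ L, (∀ u x, x ∈ N → ρ u x ∈ N) → v ∈ N → N = ⊤
  univ : ∀ (W : Type) [AddCommGroup W] [Module ℂ W]
      (ρW : UEA (Ind m n) pI →ₐ[ℂ] Module.End ℂ W) (w : W),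
      (∀ i j : Ind m n, iltI i j → ρW (gen pI i j) w = 0) →
      (∀ i : Ind m n, ρW (gen pI i i) w = lam i • w) →
      ∃ g : L →ₗ[ℂ] W, g v = w ∧ ∀ u x, g (ρ u x) = ρW u (g x)

attribute [instance] VermaM.acg VermaM.mod

/-- The predicate expressing that `Θ` is the representation of `U(gl(m+1|n))` on
`F_a ⊗ L` obtained via `φ_R` from a representation `ρ` of `U(gl(m|n))` on `L`, where the
central element `R` acts by the scalar `r`; the formulas for the action of the generators on
pure tensors (with the appropriate Koszul signs) are written out explicitly. -/
def IsTensorRep {m n : ℕ} (a r : ℂ) {L : Type} [AddCommGroup L] [Module ℂ L]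
    (ρ : UEA (Ind m n) pI →ₐ[ℂ] Module.End ℂ L)
    (Θ : UEA (Ind (m+1) n) pI →ₐ[ℂ] Module.End ℂ (FaSp m n ⊗[ℂ] L)) : Prop :=
  (∀ (c d : Ind m n) (x : FaMon m n) (v : L),
    Θ (gen pI (emb c) (emb d)) (amono x ⊗ₜ[ℂ] v) =
      (aTD a (emb c) (emb d)) (amono x) ⊗ₜ[ℂ] v
      + ((-1 : ℂ) ^ ((pI c + pI d) * parM x)) • (amono x ⊗ₜ[ℂ] (ρ (gen pI c d) v))
      + (if c = d then (((-1 : ℂ) ^ (pI c * pI d)) * r) • (amono x ⊗ₜ[ℂ] v) else 0)) ∧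
  (∀ (c : Ind m n) (x : FaMon m n) (v : L),
    Θ (gen pI (emb c) z0) (amono x ⊗ₜ[ℂ] v) =
      (aTD a (emb c) z0) (amono x) ⊗ₜ[ℂ] v
      - ∑ j : Ind m n, (((-1 : ℂ) ^ (pI c * pI j)) * ((-1 : ℂ) ^ ((pI c + pI j) * parM x))) •
          ((aDiv j (amono x)) ⊗ₜ[ℂ] (ρ (gen pI c j) v))) ∧
  (∀ (d : Ind m n) (x : FaMon m n) (v : L),
    Θ (gen pI z0 (emb d)) (amono x ⊗ₜ[ℂ] v) = (aTD a z0 (emb d)) (amono x) ⊗ₜ[ℂ] v) ∧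
  (∀ (x : FaMon m n) (v : L),
    Θ (gen pI z0 z0) (amono x ⊗ₜ[ℂ] v) =
      (aTD a z0 z0) (amono x) ⊗ₜ[ℂ] v + r • (amono x ⊗ₜ[ℂ] v))

/-- The shifted weight `λ̃ = (a+r, λ_1+r, …, λ_m+r, λ_{1̄}−r, …, λ_{n̄}−r)`. -/
def lamTilde {m n : ℕ} (a r : ℂ) (lam : Ind m n → ℂ) : Ind (m+1) n → ℂ :=
  Sum.elim (Fin.cases (a + r) fun k => lam (Sum.inl k) + r) fun k => lam (Sum.inr k) - r

/-- The Weyl vector `ρ_{m|n} = (m, m−1, …, 1, −1, −2, …, −n)`. -/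
def rhoS {m n : ℕ} : Ind m n → ℂ := Sum.elim (fun k => (m : ℂ) - k) fun k => -(k : ℂ) - 1

/-- Antidominance of a weight of `gl(m|n)`:
`⟨λ+ρ, α^∨⟩ ∉ ℤ_{>0}` for all positive even roots `α`. -/
def Antidom {m n : ℕ} (lam : Ind m n → ℂ) : Prop :=
  (∀ i j : Fin m, i < j → ¬∃ N : ℕ,
    (lam (Sum.inl i) + rhoS (m:=m) (n:=n) (Sum.inl i)) - (lam (Sum.inl j) + rhoS (m:=m) (n:=n) (Sum.inl j)) = (N : ℂ) + 1) ∧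
  (∀ i j : Fin n, i < j → ¬∃ N : ℕ,
    (lam (Sum.inr i) + rhoS (m:=m) (n:=n) (Sum.inr i)) - (lam (Sum.inr j) + rhoS (m:=m) (n:=n) (Sum.inr j)) = (N : ℂ) + 1)

/-- Typicality of a weight of `gl(m|n)`:
`(λ+ρ, α) ≠ 0` for all positive odd isotropic roots `α = δ_i − ε_j`. -/
def Typical {m n : ℕ} (lam : Ind m n → ℂ) : Prop :=
  ∀ (i : Fin m) (j : Fin n),
    (lam (Sum.inl i) + rhoS (m:=m) (n:=n) (Sum.inl i)) + (lam (Sum.inr j) + rhoS (m:=m) (n:=n) (Sum.inr j)) ≠ 0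


section PBWa
variable {ι : Type} [DecidableEq ι] (p : ι → ℕ)

/-- Parity of a root. -/
def lpar (x : ι × ι) : ℕ := p x.1 + p x.2

/-- Word in the generators. -/
def wd (l : List (ι × ι)) : UEA ι p := (l.map fun x => gen p x.1 x.2).prod

lemma wd_nil : wd p [] = 1 := rfl
lemma wd_cons (x : ι × ι) (l : List (ι × ι)) : wd p (x :: l) = gen p x.1 x.2 * wd p l := by
  simp [wd]
lemma wd_append (l l' : List (ι × ι)) : wd p (l ++ l') = wd p l * wd p l' := by
  simp [wd]

lemma gen_rel (i j k l : ι) :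
    gen p i j * gen p k l = ((-1 : ℂ) ^ ((p i + p j) * (p k + p l))) • (gen p k l * gen p i j)
      + ((if j = k then gen p i l else 0)
        - ((-1 : ℂ) ^ ((p i + p j) * (p k + p l))) • (if l = i then gen p k j else 0)) := by
  have h := RingQuot.mkAlgHom_rel ℂ (glRel.basic (p := p) i j k l)
  simp only [map_sub, map_mul, map_smul, apply_ite (RingQuot.mkAlgHom ℂ (glRel ι p)), map_zero] at h
  rw [add_comm]
  exact sub_eq_iff_eq_add.mp h

/-- Span of nonempty words in `Q` of length less than `d`. -/
def FQ (Q : ι × ι → Prop) (d : ℕ) : Submodule ℂ (UEA ι p) :=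
  Submodule.span ℂ {u | ∃ l : List (ι × ι), (∀ x ∈ l, Q x) ∧ l ≠ [] ∧ l.length < d ∧ wd p l = u}

lemma FQ_mono (Q : ι × ι → Prop) {d e : ℕ} (h : d ≤ e) : FQ p Q d ≤ FQ p Q e := by
  apply Submodule.span_mono
  rintro u ⟨l, h1, h2, h3, rfl⟩
  exact ⟨l, h1, h2, by omega, rfl⟩

lemma FQ_mem {Q : ι × ι → Prop} {d : ℕ} {l : List (ι × ι)} (h1 : ∀ x ∈ l, Q x) (h2 : l ≠ [])
    (h3 : l.length < d) : wd p l ∈ FQ p Q d :=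
  Submodule.subset_span ⟨l, h1, h2, h3, rfl⟩

lemma FQ_cons {Q : ι × ι → Prop} {d : ℕ} {x : ι × ι} (hx : Q x) {u : UEA ι p}
    (hu : u ∈ FQ p Q d) : gen p x.1 x.2 * u ∈ FQ p Q (d + 1) := by
  induction hu using Submodule.span_induction with
  | mem u hu =>
    obtain ⟨l, h1, h2, h3, rfl⟩ := hu
    rw [← wd_cons]
    exact FQ_mem p (by simpa using ⟨hx, fun a b => h1 (a, b)⟩) (by simp) (by simpa using h3)
  | zero => simp
  | add a b _ _ ha hb => rw [mul_add]; exact add_mem ha hb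
  | smul c a _ ha => rw [mul_smul_comm]; exact Submodule.smul_mem _ _ ha

lemma swap_mem {Q : ι × ι → Prop} (hQ : ∀ i j k, Q (i, j) → Q (j, k) → Q (i, k))
    (x y : ι × ι) (l : List (ι × ι)) (hx : Q x) (hy : Q y) (hl : ∀ z ∈ l, Q z) :
    wd p (x :: y :: l) - ((-1 : ℂ) ^ (lpar p x * lpar p y)) • wd p (y :: x :: l)
      ∈ FQ p Q (l.length + 2) := by
  obtain ⟨i, j⟩ := x
  obtain ⟨k, m⟩ := y
  simp only [wd_cons, lpar, ← mul_assoc]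
  rw [gen_rel p i j k m, add_mul, smul_mul_assoc, add_sub_cancel_left, sub_mul, smul_mul_assoc]
  apply sub_mem
  · split_ifs with h
    · subst h
      have := FQ_mem p (Q := Q) (d := l.length + 2) (l := (i, m) :: l)
        (by intro z hz; rcases List.mem_cons.1 hz with rfl | hz
            · exact hQ _ _ _ hx hy
            · exact hl z hz) (by simp) (by simp)
      simpa [wd_cons] using this
    · simp
  · apply Submodule.smul_mem
    split_ifs with h
    · subst h
      have := FQ_mem p (Q := Q) (d := l.length + 2) (l := (k, j) :: l)
        (by intro z hz; rcases List.mem_cons.1 hz with rfl | hz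
            · exact hQ _ _ _ hy hx
            · exact hl z hz) (by simp) (by simp)
      simpa [wd_cons] using this
    · simp

lemma perm_mem {Q : ι × ι → Prop} (hQ : ∀ i j k, Q (i, j) → Q (j, k) → Q (i, k))
    {l l' : List (ι × ι)} (h : l.Perm l') (hl : ∀ z ∈ l, Q z) :
    ∃ ε : ℂ, wd p l - ε • wd p l' ∈ FQ p Q l.length := by
  induction h with
  | nil => exact ⟨1, by simp⟩
  | @cons x l₁ l₂ h ih =>
    obtain ⟨ε, hε⟩ := ih (fun z hz => hl z (by simp [hz]))
    refine ⟨ε, ?_⟩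
    have := FQ_cons p (hl x (by simp)) hε
    rw [mul_sub, mul_smul_comm] at this
    simpa [wd_cons] using this
  | swap x y l =>
    exact ⟨_, swap_mem p hQ y x l (hl _ (by simp)) (hl _ (by simp)) (fun z hz => hl z (by simp [hz]))⟩
  | @trans l₁ l₂ l₃ h1 h2 ih1 ih2 =>
    obtain ⟨ε, hε⟩ := ih1 hl
    obtain ⟨ε', hε'⟩ := ih2 (fun z hz => hl z (h1.mem_iff.2 hz))
    refine ⟨ε * ε', ?_⟩
    rw [← h1.length_eq] at hε'
    have := add_mem hε (Submodule.smul_mem _ ε hε')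
    rwa [smul_sub, sub_add_sub_cancel, smul_smul] at this

lemma eq_zero_of_neg_smul {A : Type} [Ring A] [Algebra ℂ A] (a : A) (h : a = (-1 : ℂ) • a) :
    a = 0 := by
  rw [neg_smul, one_smul] at h
  have h2 : (2 : ℂ) • a = 0 := by
    rw [two_smul]; exact eq_neg_iff_add_eq_zero.mp h
  exact (smul_eq_zero.mp h2).resolve_left two_ne_zero

lemma odd_sq (x : ι × ι) (hx : Odd (lpar p x)) : gen p x.1 x.2 * gen p x.1 x.2 = 0 := by
  obtain ⟨i, j⟩ := x
  have hij : j ≠ i := by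
    rintro rfl
    obtain ⟨k, hk⟩ := hx
    simp only [lpar] at hk
    omega
  have h := gen_rel p i j i j
  have ho : Odd ((p i + p j) * (p i + p j)) := hx.mul hx
  rw [ho.neg_one_pow] at h
  rw [if_neg hij, smul_zero, sub_zero, add_zero] at h
  exact eq_zero_of_neg_smul _ h

/-- Admissible multisets. -/
def Adm (β : Multiset (ι × ι)) : Prop := ∀ x, Odd (lpar p x) → β.count x ≤ 1

lemma span_ord {Q : ι × ι → Prop} (hQ : ∀ i j k, Q (i, j) → Q (j, k) → Q (i, k))
    (ord : Multiset (ι × ι) → List (ι × ι)) (hord : ∀ β, (ord β : Multiset (ι × ι)) = β)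
    (N : ℕ) : ∀ (l : List (ι × ι)), l.length ≤ N → (∀ x ∈ l, Q x) → l ≠ [] →
    wd p l ∈ Submodule.span ℂ {u | ∃ γ : Multiset (ι × ι), Adm p γ ∧ (∀ x ∈ γ, Q x) ∧ γ ≠ 0 ∧
      wd p (ord γ) = u} := by
  induction N with
  | zero => intro l h _ h2; simp at h; exact absurd h h2
  | succ N ih =>
    intro l hN hl hne
    have key : FQ p Q l.length ≤ Submodule.span ℂ {u | ∃ γ : Multiset (ι × ι), Adm p γ ∧
        (∀ x ∈ γ, Q x) ∧ γ ≠ 0 ∧ wd p (ord γ) = u} := by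
      apply Submodule.span_le.2
      rintro u ⟨l', h1, h2, h3, rfl⟩
      exact ih l' (by omega) h1 h2
    by_cases hA : Adm p (l : Multiset (ι × ι))
    · have hp : l.Perm (ord l) := by
        rw [← Multiset.coe_eq_coe, hord]
      obtain ⟨ε, hε⟩ := perm_mem p hQ hp hl
      have h1 : wd p (ord l) ∈ Submodule.span ℂ {u | ∃ γ : Multiset (ι × ι), Adm p γ ∧
          (∀ x ∈ γ, Q x) ∧ γ ≠ 0 ∧ wd p (ord γ) = u} :=
        Submodule.subset_span ⟨l, hA, by simpa using hl, by simpa using hne, rfl⟩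
      have := add_mem (key hε) (Submodule.smul_mem _ ε h1)
      simpa using this
    · unfold Adm at hA
      push Not at hA
      obtain ⟨x, hx, hc⟩ := hA
      have hle : ({x, x} : Multiset (ι × ι)) ≤ l := by
        have : Multiset.replicate 2 x ≤ (l : Multiset (ι × ι)) := Multiset.le_count_iff_replicate_le.1 hc
        simpa [Multiset.replicate_succ] using this
      obtain ⟨t, ht⟩ := Multiset.le_iff_exists_add.1 hle
      have hp : l.Perm (x :: x :: t.toList) := by
        rw [← Multiset.coe_eq_coe, ht, ← Multiset.cons_coe, ← Multiset.cons_coe, Multiset.coe_toList]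
        simp [Multiset.insert_eq_cons]
      obtain ⟨ε, hε⟩ := perm_mem p hQ hp hl
      have h0 : wd p (x :: x :: t.toList) = 0 := by
        rw [wd_cons, wd_cons, ← mul_assoc, odd_sq p x hx, zero_mul]
      rw [h0, smul_zero, sub_zero] at hε
      exact key hε

lemma span_wd : Submodule.span ℂ (Set.range (wd p)) = ⊤ := by
  have hmul : ∀ a ∈ Submodule.span ℂ (Set.range (wd p)), ∀ b ∈ Submodule.span ℂ (Set.range (wd p)),
      a * b ∈ Submodule.span ℂ (Set.range (wd p)) := by
    intro a ha b hb
    have := Submodule.mul_mem_mul ha hb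
    rw [Submodule.span_mul_span] at this
    refine Submodule.span_mono ?_ this
    rintro _ ⟨_, ⟨l, rfl⟩, _, ⟨l', rfl⟩, rfl⟩
    exact ⟨l ++ l', wd_append p l l'⟩
  rw [eq_top_iff]
  rintro u -
  obtain ⟨a, rfl⟩ := RingQuot.mkAlgHom_surjective ℂ (glRel ι p) u
  induction a using FreeAlgebra.induction with
  | grade0 r =>
    rw [AlgHom.commutes, Algebra.algebraMap_eq_smul_one, ← wd_nil p]
    exact Submodule.smul_mem _ _ (Submodule.subset_span ⟨_, rfl⟩)
  | grade1 x =>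
    exact Submodule.subset_span ⟨[x], by simp [wd, gen]⟩
  | mul a b ha hb => rw [map_mul]; exact hmul _ ha _ hb
  | add a b ha hb => rw [map_add]; exact add_mem ha hb

end PBWa

set_option linter.unusedSectionVars false
set_option linter.unusedSimpArgs false
section PBWb
open scoped Kronecker
variable {ι : Type} [Fintype ι] [DecidableEq ι] (p : ι → ℕ)

/-- Matrix unit on the doubled space. -/
def AA (i j : ι) : Matrix (ι × Bool) (ι × Bool) ℂ := Matrix.single (i, false) (j, false) 1

/-- Powers of the parity operator. -/
def PP (a : ℕ) : Matrix (ι × Bool) (ι × Bool) ℂ :=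
  Matrix.diagonal fun r => (-1 : ℂ) ^ (p r.1 * a)

lemma PP_mul (a b : ℕ) : PP p a * PP p b = PP p (a + b) := by
  simp [PP, Matrix.diagonal_mul_diagonal, mul_add, pow_add]

lemma PP_zero : PP p 0 = 1 := by simp [PP]

lemma PP_two (a c : ℕ) : PP p (a + 2 * c) = PP p a := by
  unfold PP
  congr 1
  ext r
  rw [mul_add, pow_add, show p r.1 * (2 * c) = 2 * (p r.1 * c) by ring, pow_mul]
  simp

lemma AA_PP (i j : ι) (b : ℕ) : AA i j * PP p b = ((-1 : ℂ) ^ (p j * b)) • AA i j := by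
  ext r s
  simp only [AA, PP, Matrix.mul_diagonal, Matrix.smul_apply, Matrix.single_apply, smul_eq_mul]
  split_ifs with h
  · rw [← h.2]; ring
  · simp

lemma PP_AA (i j : ι) (b : ℕ) : PP p b * AA i j = ((-1 : ℂ) ^ (p i * b)) • AA i j := by
  ext r s
  simp only [AA, PP, Matrix.diagonal_mul, Matrix.smul_apply, Matrix.single_apply, smul_eq_mul]
  split_ifs with h
  · rw [← h.1]
  · simp

lemma AA_AA (i j k l : ι) : AA i j * AA k l = if j = k then AA i l else 0 := by
  unfold AA
  split_ifs with h
  · subst h; simp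
  · rw [Matrix.single_mul_single_of_ne]; simpa using h

/-- The relations of `gl`. -/
def IsRep {S : Type} [Fintype S] (B : ι → ι → Matrix S S ℂ) : Prop :=
  ∀ i j k l, B i j * B k l - ((-1 : ℂ) ^ ((p i + p j) * (p k + p l))) • (B k l * B i j)
      = ((if j = k then B i l else 0)
        - ((-1 : ℂ) ^ ((p i + p j) * (p k + p l))) • (if l = i then B k j else 0))

/-- Tensoring with the doubled natural representation. -/
def stepR {S : Type} [DecidableEq S] (B : ι → ι → Matrix S S ℂ) (i j : ι) :
    Matrix ((ι × Bool) × S) ((ι × Bool) × S) ℂ :=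
  AA i j ⊗ₖ (1 : Matrix S S ℂ) + PP p (p i + p j) ⊗ₖ B i j

lemma stepR_rep {S : Type} [Fintype S] [DecidableEq S] (B : ι → ι → Matrix S S ℂ)
    (hB : IsRep p B) : IsRep p (stepR p B) := by
  intro i j k l
  have h := hB i j k l
  set a := p i + p j with ha
  set b := p k + p l with hb
  set s := (-1 : ℂ) ^ (a * b) with hs
  have e1 : AA i j * PP p b = s • (PP p b * AA i j) := by
    rw [AA_PP, PP_AA, smul_smul, hs, ← pow_add, ha]
    congr 1
    rw [show (p i + p j) * b + p i * b = p j * b + 2 * (p i * b) by ring, pow_add, pow_mul]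
    simp
  have e2 : PP p a * AA k l = s • (AA k l * PP p a) := by
    rw [AA_PP, PP_AA, smul_smul, hs, ← pow_add, hb]
    congr 1
    rw [show a * (p k + p l) + p l * a = p k * a + 2 * (p l * a) by ring, pow_add, pow_mul]
    simp
  have e3 : (AA i j ⊗ₖ (1 : Matrix S S ℂ) + PP p a ⊗ₖ B i j) *
        (AA k l ⊗ₖ (1 : Matrix S S ℂ) + PP p b ⊗ₖ B k l) -
      s • ((AA k l ⊗ₖ (1 : Matrix S S ℂ) + PP p b ⊗ₖ B k l) *
        (AA i j ⊗ₖ (1 : Matrix S S ℂ) + PP p a ⊗ₖ B i j)) =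
      (AA i j * AA k l - s • (AA k l * AA i j)) ⊗ₖ (1 : Matrix S S ℂ) +
      PP p (a + b) ⊗ₖ (B i j * B k l - s • (B k l * B i j)) := by
    simp only [add_mul, mul_add, ← Matrix.mul_kronecker_mul, Matrix.one_mul, Matrix.mul_one, e1, e2,
      PP_mul, add_comm b a]
    simp only [sub_eq_add_neg, Matrix.add_kronecker, Matrix.kronecker_add, Matrix.smul_kronecker,
      Matrix.kronecker_smul, ← neg_smul, smul_add]
    simp only [neg_smul]
    abel
  unfold stepR
  rw [← ha, ← hb, e3, h, AA_AA, AA_AA]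
  have e4 : (if j = k then AA i l ⊗ₖ (1 : Matrix S S ℂ) + PP p (p i + p l) ⊗ₖ B i l else 0)
      = (if j = k then AA i l else 0) ⊗ₖ (1 : Matrix S S ℂ)
        + PP p (a + b) ⊗ₖ (if j = k then B i l else 0) := by
    split_ifs with hjk
    · rw [ha, hb, hjk, show p i + p k + (p k + p l) = (p i + p l) + 2 * p k by ring, PP_two]
    · simp
  have e5 : (if l = i then AA k j ⊗ₖ (1 : Matrix S S ℂ) + PP p (p k + p j) ⊗ₖ B k j else 0)
      = (if l = i then AA k j else 0) ⊗ₖ (1 : Matrix S S ℂ)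
        + PP p (a + b) ⊗ₖ (if l = i then B k j else 0) := by
    split_ifs with hjk
    · rw [ha, hb, hjk, show p i + p j + (p k + p i) = (p k + p j) + 2 * p i by ring, PP_two]
    · simp
  rw [e4, e5]
  simp only [sub_eq_add_neg, Matrix.add_kronecker, Matrix.kronecker_add, Matrix.smul_kronecker,
      Matrix.kronecker_smul, ← neg_smul, smul_add]
  simp only [neg_smul]
  abel

/-- Index set of the tensor power. -/
def SS (ι : Type) : ℕ → Type
  | 0 => Unit
  | d + 1 => (ι × Bool) × SS ι d

instance instSSF : ∀ d, Fintype (SS ι d)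
  | 0 => inferInstanceAs (Fintype Unit)
  | d + 1 => @instFintypeProd _ _ _ (instSSF d)

instance instSSD : ∀ d, DecidableEq (SS ι d)
  | 0 => inferInstanceAs (DecidableEq Unit)
  | d + 1 => @instDecidableEqProd _ _ _ (instSSD d)

/-- Generators on the tensor power. -/
def EE : ∀ d : ℕ, ι → ι → Matrix (SS ι d) (SS ι d) ℂ
  | 0 => fun _ _ => 0
  | d + 1 => stepR p (EE d)

lemma EE_rep : ∀ d, IsRep p (EE p d)
  | 0 => by intro i j k l; simp [EE]
  | d + 1 => stepR_rep p _ (EE_rep d)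

/-- Representation from matrices. -/
def repOf {S : Type} [Fintype S] [DecidableEq S] (B : ι → ι → Matrix S S ℂ)
    (hB : IsRep p B) : UEA ι p →ₐ[ℂ] Matrix S S ℂ :=
  RingQuot.liftAlgHom ℂ ⟨FreeAlgebra.lift ℂ fun x => B x.1 x.2, by
    rintro _ _ ⟨i, j, k, l⟩
    have := hB i j k l
    simpa [apply_ite (FreeAlgebra.lift ℂ fun x : ι × ι => B x.1 x.2)] using this⟩

lemma repOf_gen {S : Type} [Fintype S] [DecidableEq S] (B : ι → ι → Matrix S S ℂ)
    (hB : IsRep p B) (i j : ι) : repOf p B hB (gen p i j) = B i j := by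
  simp [repOf, gen]

/-- Tensor power representation. -/
def TT (d : ℕ) : UEA ι p →ₐ[ℂ] Matrix (SS ι d) (SS ι d) ℂ := repOf p (EE p d) (EE_rep p d)

/-- Slot functional. -/
def dl {S : Type} (k : ι × ι) : Matrix ((ι × Bool) × S) ((ι × Bool) × S) ℂ →ₗ[ℂ] Matrix S S ℂ where
  toFun M := Matrix.of fun a b => M ((k.1, false), a) ((k.2, false), b)
    - M ((k.1, true), a) ((k.2, true), b)
  map_add' M N := by ext a b; simp; ring
  map_smul' c M := by ext a b; simp; ring

lemma dl_kron {S : Type} (k : ι × ι) (X : Matrix (ι × Bool) (ι × Bool) ℂ) (Y : Matrix S S ℂ) :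
    dl k (X ⊗ₖ Y) = (X (k.1, false) (k.2, false) - X (k.1, true) (k.2, true)) • Y := by
  ext a b; simp [dl]; ring

lemma dl_PP {S : Type} [Fintype S] (k : ι × ι) (a : ℕ) (Y : Matrix S S ℂ)
    (M : Matrix ((ι × Bool) × S) ((ι × Bool) × S) ℂ) :
    dl k ((PP p a ⊗ₖ Y) * M) = ((-1 : ℂ) ^ (p k.1 * a)) • (Y * dl k M) := by
  ext r s
  simp only [dl, LinearMap.coe_mk, AddHom.coe_mk, Matrix.of_apply, Matrix.mul_apply, PP,
    Matrix.kroneckerMap_apply, Fintype.sum_prod_type, Matrix.diagonal_apply, Matrix.smul_apply,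
    smul_eq_mul, Prod.mk.injEq]
  simp [Finset.sum_ite_eq, ite_and, mul_sub, Finset.sum_sub_distrib, Finset.mul_sum, mul_assoc]

/-- Parity of a word. -/
def qq (l : List (ι × ι)) : ℕ := (l.map (lpar p)).sum

/-- Words of length less than `d`. -/
def Fl (d : ℕ) : Submodule ℂ (UEA ι p) :=
  Submodule.span ℂ {u | ∃ l : List (ι × ι), l.length < d ∧ wd p l = u}

/-- Removal functional on words. -/
def gg (k : ι × ι) : List (ι × ι) → UEA ι p
  | [] => 0
  | x :: l => (if x = k then ((-1 : ℂ) ^ (p k.2 * qq p l)) • wd p l else 0)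
      + ((-1 : ℂ) ^ (p k.1 * lpar p x)) • (gen p x.1 x.2 * gg k l)

section onestep
variable {S : Type} [Fintype S] [DecidableEq S] (B : ι → ι → Matrix S S ℂ) (hB : IsRep p B)

/-- Lower order terms. -/
def RR (n : ℕ) : Submodule ℂ (Matrix ((ι × Bool) × S) ((ι × Bool) × S) ℂ) :=
  Submodule.span ℂ {M | ∃ (X : Matrix (ι × Bool) (ι × Bool) ℂ) (l : List (ι × ι)), l.length < n ∧
    X ⊗ₖ repOf p B hB (wd p l) = M}

lemma RR_mono {a b : ℕ} (h : a ≤ b) : RR p B hB a ≤ RR p B hB b := by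
  apply Submodule.span_mono
  rintro M ⟨X, l, h1, rfl⟩
  exact ⟨X, l, by omega, rfl⟩

lemma RR_A {n : ℕ} (Y : Matrix (ι × Bool) (ι × Bool) ℂ) {M} (hM : M ∈ RR p B hB n) :
    (Y ⊗ₖ (1 : Matrix S S ℂ)) * M ∈ RR p B hB n := by
  induction hM using Submodule.span_induction with
  | mem u hu =>
    obtain ⟨X, l, h1, rfl⟩ := hu
    rw [← Matrix.mul_kronecker_mul, Matrix.one_mul]
    exact Submodule.subset_span ⟨_, l, h1, rfl⟩
  | zero => simp
  | add a b _ _ ha hb => rw [mul_add]; exact add_mem ha hb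
  | smul c a _ ha => rw [mul_smul_comm]; exact Submodule.smul_mem _ _ ha

lemma RR_P {n m : ℕ} (hnm : n + 1 ≤ m ∨ n = 0) (Y : Matrix (ι × Bool) (ι × Bool) ℂ) (x : ι × ι) {M}
    (hM : M ∈ RR p B hB n) :
    (Y ⊗ₖ B x.1 x.2) * M ∈ RR p B hB m := by
  induction hM using Submodule.span_induction with
  | mem u hu =>
    obtain ⟨X, l, h1, rfl⟩ := hu
    rw [← Matrix.mul_kronecker_mul, ← repOf_gen p B hB, ← map_mul, ← wd_cons]
    exact Submodule.subset_span ⟨_, x :: l, by simp; omega, rfl⟩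
  | zero => simp
  | add a b _ _ ha hb => rw [mul_add]; exact add_mem ha hb
  | smul c a _ ha => rw [mul_smul_comm]; exact Submodule.smul_mem _ _ ha

/-- Linear terms. -/
def LL : List (ι × ι) → Matrix ((ι × Bool) × S) ((ι × Bool) × S) ℂ
  | [] => 0
  | x :: l => (AA x.1 x.2 * PP p (qq p l)) ⊗ₖ repOf p B hB (wd p l)
      + (PP p (lpar p x) ⊗ₖ B x.1 x.2) * LL l

lemma LL_mem (l : List (ι × ι)) : LL p B hB l ∈ RR p B hB l.length := by
  induction l with
  | nil => simp [LL]
  | cons x l ih =>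
    refine add_mem (Submodule.subset_span ⟨_, l, by simp, rfl⟩) ?_
    exact RR_P p B hB (Or.inl (by simp)) _ x ih

lemma decomp (l : List (ι × ι)) :
    repOf p (stepR p B) (stepR_rep p B hB) (wd p l) - PP p (qq p l) ⊗ₖ repOf p B hB (wd p l)
      - LL p B hB l ∈ RR p B hB (l.length - 1) := by
  induction l with
  | nil => simp [LL, qq, wd_nil, PP_zero]
  | cons x l ih =>
    set R := repOf p (stepR p B) (stepR_rep p B hB) (wd p l)
      - PP p (qq p l) ⊗ₖ repOf p B hB (wd p l) - LL p B hB l with hR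
    have hR' : repOf p (stepR p B) (stepR_rep p B hB) (wd p l) =
      PP p (qq p l) ⊗ₖ repOf p B hB (wd p l) + LL p B hB l + R := by rw [hR]; abel
    have hq : qq p (x :: l) = lpar p x + qq p l := by simp [qq]
    have : repOf p (stepR p B) (stepR_rep p B hB) (wd p (x :: l))
        - PP p (qq p (x :: l)) ⊗ₖ repOf p B hB (wd p (x :: l)) - LL p B hB (x :: l)
        = (AA x.1 x.2 ⊗ₖ (1 : Matrix S S ℂ)) * LL p B hB l
          + (AA x.1 x.2 ⊗ₖ (1 : Matrix S S ℂ)) * R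
          + (PP p (lpar p x) ⊗ₖ B x.1 x.2) * R := by
      rw [wd_cons, map_mul, map_mul, repOf_gen, repOf_gen, hR', hq, LL, stepR]
      simp only [add_mul, mul_add, ← Matrix.mul_kronecker_mul, Matrix.one_mul, PP_mul, lpar]
      abel
    rw [this]
    have hlen : (x :: l).length - 1 = l.length := by simp
    rw [hlen]
    refine add_mem (add_mem (RR_A p B hB _ (LL_mem p B hB l)) ?_) ?_
    · exact RR_A p B hB _ (RR_mono p B hB (by omega) ih)
    · exact RR_P p B hB (by omega) _ x ih

lemma dl_LL (k : ι × ι) (l : List (ι × ι)) :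
    dl k (LL p B hB l) = repOf p B hB (gg p k l) := by
  induction l with
  | nil => simp [LL, gg]
  | cons x l ih =>
    rw [LL, gg, map_add, map_add, dl_kron, dl_PP, ih, map_smul, map_mul, repOf_gen, AA_PP]
    congr 1
    by_cases h : x = k
    · subst h; simp [AA]
    · have : ¬ (x.1 = k.1 ∧ x.2 = k.2) := by simpa [Prod.ext_iff] using h
      simp [AA, h, Matrix.single_apply, this]

lemma dl_RR (k : ι × ι) {n : ℕ} {M} (hM : M ∈ RR p B hB n) :
    ∃ u ∈ Fl p n, dl k M = repOf p B hB u := by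
  induction hM using Submodule.span_induction with
  | mem u hu =>
    obtain ⟨X, l, h1, rfl⟩ := hu
    rw [dl_kron, ← map_smul]
    exact ⟨_, Submodule.smul_mem _ _ (Submodule.subset_span ⟨l, h1, rfl⟩), rfl⟩
  | zero => exact ⟨0, by simp, by simp⟩
  | add a b _ _ ha hb =>
    obtain ⟨u, hu, e⟩ := ha
    obtain ⟨v, hv, e'⟩ := hb
    exact ⟨u + v, add_mem hu hv, by simp [e, e']⟩
  | smul c a _ ha =>
    obtain ⟨u, hu, e⟩ := ha
    exact ⟨c • u, Submodule.smul_mem _ _ hu, by rw [map_smul, map_smul, e]⟩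

lemma dl_step (k : ι × ι) (l : List (ι × ι)) :
    ∃ u ∈ Fl p (l.length - 1), dl k (repOf p (stepR p B) (stepR_rep p B hB) (wd p l))
      = repOf p B hB (gg p k l) + repOf p B hB u := by
  obtain ⟨u, hu, e⟩ := dl_RR p B hB k (decomp p B hB l)
  refine ⟨u, hu, ?_⟩
  rw [map_sub, map_sub, dl_LL, dl_kron] at e
  have h0 : PP p (qq p l) (k.1, false) (k.2, false) - PP p (qq p l) (k.1, true) (k.2, true) = 0 := by
    simp [PP, Matrix.diagonal_apply]
  rw [h0, zero_smul, sub_zero] at e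
  rw [← e]; abel

end onestep
end PBWb

section PBWc
variable {ι : Type} [Fintype ι] [DecidableEq ι] (p : ι → ℕ)

/-- Iterated slot functional. -/
def Psi : ∀ ks : List (ι × ι), Matrix (SS ι ks.length) (SS ι ks.length) ℂ →ₗ[ℂ] ℂ
  | [] => { toFun := fun M => M () ()
            map_add' := fun _ _ => rfl
            map_smul' := fun _ _ => rfl }
  | k :: ks => (Psi ks).comp (dl (S := SS ι ks.length) k)

/-- Functional on `U`. -/
def Ps (ks : List (ι × ι)) : UEA ι p →ₗ[ℂ] ℂ := (Psi ks).comp (TT p ks.length).toLinearMap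

lemma Ps_cons (k : ι × ι) (ks l : List (ι × ι)) :
    ∃ u ∈ Fl p (l.length - 1), Ps p (k :: ks) (wd p l) = Ps p ks (gg p k l) + Ps p ks u := by
  obtain ⟨u, hu, e⟩ := dl_step p (EE p ks.length) (EE_rep p ks.length) k l
  refine ⟨u, hu, ?_⟩
  have := congrArg (Psi ks) e
  rw [map_add] at this
  exact this

lemma Fl_mono {a b : ℕ} (h : a ≤ b) : Fl p a ≤ Fl p b := by
  apply Submodule.span_mono
  rintro M ⟨l, h1, rfl⟩
  exact ⟨l, by omega, rfl⟩

lemma FQ_le_Fl (Q : ι × ι → Prop) (d : ℕ) : FQ p Q d ≤ Fl p d := by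
  apply Submodule.span_mono
  rintro M ⟨l, _, _, h1, rfl⟩
  exact ⟨l, by omega, rfl⟩

lemma Fl_cons {n m : ℕ} (hnm : n + 1 ≤ m ∨ n = 0) (x : ι × ι) {u : UEA ι p}
    (hu : u ∈ Fl p n) : gen p x.1 x.2 * u ∈ Fl p m := by
  induction hu using Submodule.span_induction with
  | mem u hu =>
    obtain ⟨l, h3, rfl⟩ := hu
    rw [← wd_cons]
    exact Submodule.subset_span ⟨x :: l, by simp; omega, rfl⟩
  | zero => simp
  | add a b _ _ ha hb => rw [mul_add]; exact add_mem ha hb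
  | smul c a _ ha => rw [mul_smul_comm]; exact Submodule.smul_mem _ _ ha

lemma gg_mem (k : ι × ι) (l : List (ι × ι)) :
    gg p k l ∈ Submodule.span ℂ {u | ∃ l' : List (ι × ι), (k :: l').Perm l ∧ wd p l' = u} := by
  induction l with
  | nil => simp [gg]
  | cons x l ih =>
    rw [gg]
    refine add_mem ?_ (Submodule.smul_mem _ _ ?_)
    · split_ifs with h
      · subst h
        exact Submodule.smul_mem _ _ (Submodule.subset_span ⟨l, List.Perm.refl _, rfl⟩)
      · simp
    · generalize gg p k l = v at ih
      induction ih using Submodule.span_induction with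
      | mem u hu =>
        obtain ⟨l', h3, rfl⟩ := hu
        rw [← wd_cons]
        exact Submodule.subset_span ⟨x :: l', (List.Perm.swap _ _ _).trans (h3.cons x), rfl⟩
      | zero => simp
      | add a b _ _ ha hb => rw [mul_add]; exact add_mem ha hb
      | smul c a _ ha => rw [mul_smul_comm]; exact Submodule.smul_mem _ _ ha

lemma gg_Fl (k : ι × ι) (l : List (ι × ι)) : gg p k l ∈ Fl p l.length := by
  refine Submodule.span_mono ?_ (gg_mem p k l)
  rintro _ ⟨l', h, rfl⟩
  refine ⟨l', ?_, rfl⟩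
  have := h.length_eq
  simp at this; omega

lemma gg_not_mem (k : ι × ι) (l : List (ι × ι)) (h : k ∉ l) : gg p k l = 0 := by
  induction l with
  | nil => rfl
  | cons x l ih =>
    simp only [List.mem_cons, not_or] at h
    rw [gg, ih h.2, if_neg (Ne.symm h.1)]
    simp

lemma move_even (k : ι × ι) (hk : Even (lpar p k)) (l : List (ι × ι)) (h : k ∈ l) :
    gen p k.1 k.2 * wd p (l.erase k) - wd p l ∈ Fl p l.length := by
  induction l with
  | nil => simp at h
  | cons x l ih =>
    by_cases hx : x = k
    · subst hx
      simp [wd_cons]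
    · have hkl : k ∈ l := by
        rcases List.mem_cons.1 h with h | h
        · exact absurd h.symm hx
        · exact h
      have he : (x :: l).erase k = x :: l.erase k := by
        rw [List.erase_cons_tail]; simpa using hx
      have h1 := swap_mem p (Q := fun _ => True) (fun _ _ _ _ _ => trivial) k x (l.erase k)
        trivial trivial (fun _ _ => trivial)
      have hs : (-1 : ℂ) ^ (lpar p k * lpar p x) = 1 := (hk.mul_right _).neg_one_pow
      rw [hs, one_smul] at h1
      have h2 := Fl_cons p (m := l.length + 1) (Or.inl le_rfl) x (ih hkl)
      have hlen : (l.erase k).length + 2 = l.length + 1 := by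
        have := List.length_erase_of_mem hkl
        have := List.length_pos_of_mem hkl
        omega
      rw [hlen] at h1
      have := add_mem (FQ_le_Fl p _ _ h1) h2
      rw [he]
      simp only [wd_cons, mul_sub] at this ⊢
      simpa using this

lemma qq_cons (x : ι × ι) (l : List (ι × ι)) : qq p (x :: l) = lpar p x + qq p l := by simp [qq]

lemma gg_even (k : ι × ι) (hk : Even (lpar p k)) (l : List (ι × ι)) :
    gg p k l - (((-1 : ℂ) ^ (p k.1 * qq p l)) * (l.count k : ℂ)) • wd p (l.erase k)
      ∈ Fl p (l.length - 1) := by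
  have hpar : ∀ a : ℕ, (-1 : ℂ) ^ (p k.2 * a) = (-1 : ℂ) ^ (p k.1 * a) := by
    intro a
    have : Even (p k.1 * a + p k.2 * a) := by rw [← add_mul]; exact hk.mul_right _
    rcases Nat.even_or_odd (p k.1 * a) with h1 | h1
    · have h2 := (Nat.even_add.1 this).1 h1
      rw [h1.neg_one_pow, h2.neg_one_pow]
    · have h2 : Odd (p k.2 * a) := by
        rw [← Nat.not_even_iff_odd] at h1 ⊢
        exact fun h => h1 ((Nat.even_add.1 this).2 h)
      rw [h1.neg_one_pow, h2.neg_one_pow]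
  induction l with
  | nil => simp [gg]
  | cons x l ih =>
    have hlen : (x :: l).length - 1 = l.length := by simp
    rw [hlen]
    have ih' := Submodule.smul_mem _ ((-1 : ℂ) ^ (p k.1 * lpar p x))
      (Fl_cons p (m := l.length) (by omega) x ih)
    by_cases hx : x = k
    · subst hx
      have hs : (-1 : ℂ) ^ (p x.1 * lpar p x) = 1 := (hk.mul_left _).neg_one_pow
      have hs' : (-1 : ℂ) ^ (p x.1 * qq p (x :: l)) = (-1 : ℂ) ^ (p x.1 * qq p l) := by
        rw [qq_cons, mul_add, pow_add, hs, one_mul]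
      rw [gg, if_pos rfl, hpar, hs', List.erase_cons_head, List.count_cons_self, hs, one_smul]
      rw [hs, one_smul, mul_sub, mul_smul_comm] at ih'
      by_cases hm : x ∈ l
      · have h2 := Submodule.smul_mem _ (((-1 : ℂ) ^ (p x.1 * qq p l)) * (l.count x : ℂ))
          (move_even p x hk l hm)
        have h3 := add_mem ih' h2
        convert h3 using 1
        push_cast
        rw [smul_sub, mul_add, add_smul, mul_one]
        abel
      · rw [List.count_eq_zero_of_not_mem hm, gg_not_mem p x l hm]
        simp
    · have he : (x :: l).erase k = x :: l.erase k := by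
        rw [List.erase_cons_tail]; simpa using hx
      rw [gg, if_neg hx, zero_add, he, wd_cons, List.count_cons_of_ne hx, qq_cons, mul_add,
        pow_add]
      rw [mul_sub, mul_smul_comm, smul_sub, smul_smul, ← mul_assoc] at ih'
      exact ih'

lemma Ps_Fl (ks : List (ι × ι)) : ∀ u ∈ Fl p ks.length, Ps p ks u = 0 := by
  induction ks with
  | nil =>
    intro u hu
    have : Fl p ([] : List (ι × ι)).length = ⊥ := by
      simp [Fl]
    rw [this] at hu
    rw [(Submodule.mem_bot ℂ).1 hu, map_zero]
  | cons k ks ih =>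
    intro u hu
    induction hu using Submodule.span_induction with
    | mem u hu =>
      obtain ⟨l, h3, rfl⟩ := hu
      obtain ⟨u, hu, e⟩ := Ps_cons p k ks l
      simp only [List.length_cons] at h3
      rw [e, ih _ (Fl_mono p (by omega) (gg_Fl p k l)), ih _ (Fl_mono p (by omega) hu), add_zero]
    | zero => simp
    | add a b _ _ ha hb => rw [map_add, ha, hb, add_zero]
    | smul c a _ ha => rw [map_smul, ha, smul_zero]

lemma Ps_eq_gg (k : ι × ι) (ks l : List (ι × ι)) (hl : l.length = ks.length + 1) :
    Ps p (k :: ks) (wd p l) = Ps p ks (gg p k l) := by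
  obtain ⟨u, hu, e⟩ := Ps_cons p k ks l
  rw [e, Ps_Fl p ks u (Fl_mono p (by omega) hu), add_zero]

lemma Ps_not_perm (ks : List (ι × ι)) : ∀ l : List (ι × ι), l.length = ks.length → ¬ l.Perm ks →
    Ps p ks (wd p l) = 0 := by
  induction ks with
  | nil =>
    intro l h1 h2
    simp at h1; subst h1; exact absurd (List.Perm.refl _) h2
  | cons k ks ih =>
    intro l h1 h2
    rw [Ps_eq_gg p k ks l (by simpa using h1)]
    have := gg_mem p k l
    generalize gg p k l = v at this
    induction this using Submodule.span_induction with
    | mem u hu =>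
      obtain ⟨l', h3, rfl⟩ := hu
      apply ih
      · have := h3.length_eq
        simp at this h1; omega
      · intro h; exact h2 (h3.symm.trans (h.cons k))
    | zero => simp
    | add a b _ _ ha hb => rw [map_add, ha, hb, add_zero]
    | smul c a _ ha => rw [map_smul, ha, smul_zero]

lemma Ps_self (ks : List (ι × ι)) : Adm p (ks : Multiset (ι × ι)) → Ps p ks (wd p ks) ≠ 0 := by
  induction ks with
  | nil =>
    intro _
    simp [Ps, wd_nil, Psi]
    intro h
    have h1 : (1 : Matrix (SS ι 0) (SS ι 0) ℂ) () () = 1 := rfl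
    have := h1.symm.trans h
    exact one_ne_zero this
  | cons k ks ih =>
    intro hA
    have hA' : Adm p (ks : Multiset (ι × ι)) := fun x hx =>
      (Multiset.count_le_of_le x (by rw [← Multiset.cons_coe]; exact Multiset.le_cons_self _ _)).trans
        (hA x hx)
    rw [Ps_eq_gg p k ks (k :: ks) (by simp)]
    rcases Nat.even_or_odd (lpar p k) with he | ho
    · have h := gg_even p k he (k :: ks)
      have h0 := Ps_Fl p ks _ (Fl_mono p (by simp) h)
      rw [map_sub, sub_eq_zero] at h0
      rw [h0, map_smul, List.erase_cons_head, List.count_cons_self]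
      refine smul_ne_zero (mul_ne_zero (pow_ne_zero _ (by norm_num)) ?_) (ih hA')
      exact Nat.cast_ne_zero.2 (by omega)
    · have hk : k ∉ ks := by
        intro hmem
        have h1 := hA k ho
        rw [← Multiset.cons_coe, Multiset.count_cons_self] at h1
        have h2 := Multiset.count_pos.2 (show k ∈ (ks : Multiset _) from hmem)
        omega
      rw [gg, if_pos rfl, gg_not_mem p k ks hk, mul_zero, smul_zero, add_zero, map_smul]
      exact smul_ne_zero (pow_ne_zero _ (by norm_num)) (ih hA')

/-- Linear combinations of ordered monomials. -/
def WW (ord : Multiset (ι × ι) → List (ι × ι)) :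
    ({β : Multiset (ι × ι) // Adm p β} →₀ ℂ) →ₗ[ℂ] UEA ι p :=
  Finsupp.linearCombination ℂ fun β => wd p (ord β.1)

lemma WW_faithful (ord : Multiset (ι × ι) → List (ι × ι))
    (hord : ∀ β, (ord β : Multiset (ι × ι)) = β) (c : {β : Multiset (ι × ι) // Adm p β} →₀ ℂ)
    (hc : ∀ d, TT p d (WW p ord c) = 0) : c = 0 := by
  by_contra hne
  obtain ⟨β, hβ, hmax⟩ := Finset.exists_max_image c.support (fun β => Multiset.card β.1)
    (Finsupp.support_nonempty_iff.2 hne)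
  have h0 : Ps p (ord β.1) (WW p ord c) = 0 := by
    simp [Ps, hc]
  have hlen : ∀ γ, (ord γ).length = Multiset.card γ := fun γ => by
    conv_rhs => rw [← hord γ]
    simp
  rw [WW, Finsupp.linearCombination_apply, Finsupp.sum, map_sum,
    Finset.sum_eq_single_of_mem β hβ] at h0
  · rw [map_smul] at h0
    refine (smul_ne_zero (Finsupp.mem_support_iff.1 hβ) (Ps_self p _ ?_)) h0
    rw [hord]; exact β.2
  · intro γ hγ hne
    rw [map_smul]
    have hle := hmax γ hγ
    rcases lt_or_eq_of_le hle with h | h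
    · rw [Ps_Fl p _ _ (Submodule.subset_span ⟨ord γ.1, by rw [hlen, hlen]; exact h, rfl⟩), smul_zero]
    · rw [Ps_not_perm p _ _ (by rw [hlen, hlen]; exact h), smul_zero]
      intro hp
      apply hne
      apply Subtype.ext
      rw [← hord γ.1, ← hord β.1]
      exact Multiset.coe_eq_coe.2 hp

lemma WW_inj (ord : Multiset (ι × ι) → List (ι × ι))
    (hord : ∀ β, (ord β : Multiset (ι × ι)) = β) : Function.Injective (WW p ord) := by
  rw [← LinearMap.ker_eq_bot, LinearMap.ker_eq_bot']
  intro c hc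
  exact WW_faithful p ord hord c (fun d => by rw [hc, map_zero])

lemma WW_surj (ord : Multiset (ι × ι) → List (ι × ι))
    (hord : ∀ β, (ord β : Multiset (ι × ι)) = β) : Function.Surjective (WW p ord) := by
  rw [← LinearMap.range_eq_top, eq_top_iff, ← span_wd p, Submodule.span_le]
  rintro _ ⟨l, rfl⟩
  have hmem : ∀ β, Adm p β → wd p (ord β) ∈ LinearMap.range (WW p ord) := fun β hβ =>
    ⟨Finsupp.single ⟨β, hβ⟩ 1, by simp [WW]⟩
  by_cases hl : l = []
  · subst hl
    have := hmem 0 (fun x _ => by simp)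
    have h0 : ord 0 = [] := by
      have := hord 0
      simpa using this
    rw [h0] at this
    exact this
  · have := span_ord p (Q := fun _ => True) (fun _ _ _ _ _ => trivial) ord hord l.length l le_rfl
      (fun _ _ => trivial) hl
    refine (Submodule.span_le.2 ?_) this
    rintro _ ⟨γ, h1, _, _, rfl⟩
    exact hmem γ h1

lemma faithful (u : UEA ι p) (h : ∀ d, TT p d u = 0) : u = 0 := by
  obtain ⟨c, rfl⟩ := WW_surj p Multiset.toList (fun β => Multiset.coe_toList β) u
  rw [WW_faithful p _ (fun β => Multiset.coe_toList β) c h, map_zero]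

end PBWc

section HCa
open scoped Kronecker
open Matrix
open scoped ComplexOrder
variable {ι : Type} [Fintype ι] [DecidableEq ι] (p : ι → ℕ) (rk : ι → ℕ)

lemma EE_star : ∀ (d : ℕ) (i j : ι), (EE p d i j)ᴴ = EE p d j i
  | 0, i, j => by simp [EE]
  | d + 1, i, j => by
    have ih := EE_star d i j
    change (AA i j ⊗ₖ (1 : Matrix (SS ι d) (SS ι d) ℂ) + PP p (p i + p j) ⊗ₖ EE p d i j)ᴴ
      = AA j i ⊗ₖ (1 : Matrix (SS ι d) (SS ι d) ℂ) + PP p (p j + p i) ⊗ₖ EE p d j i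
    rw [Matrix.conjTranspose_add, Matrix.conjTranspose_kronecker, Matrix.conjTranspose_kronecker,
      ih, Matrix.conjTranspose_one, add_comm (p j)]
    congr 2
    · ext a b; simp [AA, Matrix.single_apply, and_comm]
    · ext a b; simp [PP, Matrix.diagonal_apply, Matrix.conjTranspose_apply]
      split_ifs <;> simp_all

/-- Height of a basis vector. -/
def ht : ∀ d : ℕ, SS ι d → ℕ
  | 0, _ => 0
  | d + 1, s => (if (s : (ι × Bool) × SS ι d).1.2 then 0 else rk (s : (ι × Bool) × SS ι d).1.1)
      + ht d (s : (ι × Bool) × SS ι d).2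

lemma EE_ht : ∀ (d : ℕ) (i j : ι), rk i < rk j → ∀ s t, EE p d i j s t ≠ 0 →
    ht rk d s < ht rk d t
  | 0, i, j, _, s, t, h => by simp [EE] at h
  | d + 1, i, j, hij, s, t, h => by
    have ih := EE_ht d i j hij
    obtain ⟨⟨a, b⟩, s⟩ : (ι × Bool) × SS ι d := s
    obtain ⟨⟨a', b'⟩, t⟩ : (ι × Bool) × SS ι d := t
    change (if b then 0 else rk a) + ht rk d s < (if b' then 0 else rk a') + ht rk d t
    have h' : AA i j (a, b) (a', b') * (1 : Matrix (SS ι d) (SS ι d) ℂ) s t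
      + PP p (p i + p j) (a, b) (a', b') * EE p d i j s t ≠ 0 := h
    by_cases h1 : AA i j (a, b) (a', b') * (1 : Matrix (SS ι d) (SS ι d) ℂ) s t = 0
    · rw [h1, zero_add] at h'
      have h2 := left_ne_zero_of_mul h'
      have h3 := ih s t (right_ne_zero_of_mul h')
      have h4 : (a, b) = (a', b') := by
        by_contra hne
        exact h2 (Matrix.diagonal_apply_ne _ hne)
      simp only [Prod.mk.injEq] at h4
      rw [h4.1, h4.2]; omega
    · have h2 := left_ne_zero_of_mul h1
      have h3 := right_ne_zero_of_mul h1
      have h4 : s = t := by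
        by_contra hne
        exact h3 (Matrix.one_apply_ne hne)
      have h5 : (i, false) = (a, b) ∧ (j, false) = (a', b') := by
        by_contra hne
        exact h2 (by simp only [AA, Matrix.single_apply]; rw [if_neg hne])
      simp only [Prod.mk.injEq] at h5
      obtain ⟨⟨rfl, rfl⟩, rfl, rfl⟩ := h5
      rw [h4]; simpa using hij

section mat
variable {S : Type} [Fintype S] [DecidableEq S]

lemma star_move (E Et : Matrix S S ℂ) (h : Eᴴ = Et) (x y : S → ℂ) :
    star y ⬝ᵥ (E *ᵥ x) = star (Et *ᵥ y) ⬝ᵥ x := by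
  rw [← h, Matrix.star_mulVec, Matrix.conjTranspose_conjTranspose, Matrix.dotProduct_mulVec]

lemma mat_HC (B : ι → ι → Matrix S S ℂ) (hB : ∀ i j, (B i j)ᴴ = B j i) (h : S → ℕ)
    (hh : ∀ i j, rk i < rk j → ∀ s t, B i j s t ≠ 0 → h s < h t) (Z : Matrix S S ℂ)
    (hZ : ∀ i j, B i j * Z = Z * B i j)
    (hT : Z ∈ Submodule.span ℂ ({M | ∃ i j A, rk j < rk i ∧ M = B i j * A} ∪
      {M | ∃ i j A, rk i < rk j ∧ M = A * B i j} : Set (Matrix S S ℂ))) : Z = 0 := by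
  have key : ∀ x y : S → ℂ, (∀ i j, rk i < rk j → B i j *ᵥ x = 0) →
      (∀ i j, rk i < rk j → B i j *ᵥ y = 0) → star y ⬝ᵥ (Z *ᵥ x) = 0 := by
    intro x y hx hy
    clear hZ
    induction hT using Submodule.span_induction with
    | mem M hM =>
      rcases hM with ⟨i, j, A, hij, rfl⟩ | ⟨i, j, A, hij, rfl⟩
      · rw [← Matrix.mulVec_mulVec, star_move _ _ (hB i j), hy j i hij]; simp
      · rw [← Matrix.mulVec_mulVec, hx i j hij]; simp
    | zero => simp
    | add M N _ _ h1 h2 => rw [Matrix.add_mulVec, dotProduct_add, h1, h2, add_zero]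
    | smul c M _ h1 => rw [Matrix.smul_mulVec, dotProduct_smul, h1, smul_zero]
  have hZs : ∀ i j, B i j * Zᴴ = Zᴴ * B i j := by
    intro i j
    have := congrArg Matrix.conjTranspose (hZ j i)
    rw [Matrix.conjTranspose_mul, Matrix.conjTranspose_mul, hB] at this
    exact this.symm
  have hinv : ∀ y : S → ℂ, (∀ i j, rk i < rk j → B i j *ᵥ y = 0) → Zᴴ *ᵥ y = 0 := by
    intro y hy
    rw [← dotProduct_star_self_eq_zero, star_move Zᴴ Z (Matrix.conjTranspose_conjTranspose Z),
      Matrix.star_dotProduct, key _ y _ hy, star_zero]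
    intro i j hij
    rw [Matrix.mulVec_mulVec, hZs, ← Matrix.mulVec_mulVec, hy i j hij, Matrix.mulVec_zero]
  have main : ∀ N : ℕ, ∀ x : S → ℂ, (∀ s, (Z *ᵥ x) s ≠ 0 → h s < N) → Z *ᵥ x = 0 := by
    intro N
    induction N with
    | zero =>
      intro x hx
      ext s
      by_contra hs
      exact absurd (hx s hs) (by omega)
    | succ N ih =>
      intro x hx
      have hy : ∀ i j, rk i < rk j → B i j *ᵥ (Z *ᵥ x) = 0 := by
        intro i j hij
        rw [Matrix.mulVec_mulVec, hZ, ← Matrix.mulVec_mulVec]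
        apply ih
        intro s hs
        rw [Matrix.mulVec_mulVec, ← hZ, ← Matrix.mulVec_mulVec] at hs
        obtain ⟨t, _, ht⟩ := Finset.exists_ne_zero_of_sum_ne_zero hs
        have h1 := hh i j hij s t (left_ne_zero_of_mul ht)
        have h2 := hx t (right_ne_zero_of_mul ht)
        omega
      rw [← dotProduct_star_self_eq_zero, star_move Z Zᴴ rfl, hinv _ hy]
      simp
  have main' : ∀ x : S → ℂ, Z *ᵥ x = 0 := fun x =>
    main (Finset.univ.sup h + 1) x fun s _ => Nat.lt_succ_of_le (Finset.le_sup (Finset.mem_univ s))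
  ext a b
  have := congrFun (main' (Pi.single b 1)) a
  simpa using this
end mat

/-- The complement of the Cartan part. -/
def TTs : Submodule ℂ (UEA ι p) :=
  Submodule.span ℂ ({M | ∃ i j A, rk j < rk i ∧ M = gen p i j * A} ∪
      {M | ∃ i j A, rk i < rk j ∧ M = A * gen p i j} : Set (UEA ι p))

lemma HC_inj (z : UEA ι p) (hz : ∀ u, u * z = z * u) (hT : z ∈ TTs p rk) : z = 0 := by
  apply faithful
  intro d
  have hg : ∀ i j, TT p d (gen p i j) = EE p d i j := fun i j => repOf_gen p _ _ i j
  apply mat_HC rk (EE p d) (EE_star p d) (ht rk d) (EE_ht p rk d)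
  · intro i j
    rw [← hg, ← map_mul, hz, map_mul]
  · have h1 : TT p d z ∈ (TTs p rk).map (TT p d).toLinearMap := ⟨z, hT, rfl⟩
    rw [TTs, Submodule.map_span] at h1
    refine Submodule.span_mono ?_ h1
    rintro _ ⟨u, ⟨i, j, A, hij, rfl⟩ | ⟨i, j, A, hij, rfl⟩, rfl⟩
    · exact Or.inl ⟨i, j, TT p d A, hij, by rw [← hg]; exact map_mul (TT p d) _ _⟩
    · exact Or.inr ⟨i, j, TT p d A, hij, by rw [← hg]; exact map_mul (TT p d) _ _⟩
end HCa

section HCb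
variable {ι : Type} [Fintype ι] [DecidableEq ι] (p : ι → ℕ) (rk : ι → ℕ)

/-- Triangular ordering of a multiset. -/
def ord3 (β : Multiset (ι × ι)) : List (ι × ι) :=
  (β.filter fun x => rk x.2 < rk x.1).toList ++ ((β.filter fun x => x.1 = x.2).toList ++
    (β.filter fun x => rk x.1 < rk x.2).toList)

lemma ord3_coe (hrk : Function.Injective rk) (β : Multiset (ι × ι)) :
    (ord3 rk β : Multiset (ι × ι)) = β := by
  unfold ord3
  rw [← Multiset.coe_add, ← Multiset.coe_add, Multiset.coe_toList, Multiset.coe_toList,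
    Multiset.coe_toList]
  ext x
  rw [Multiset.count_add, Multiset.count_add, Multiset.count_filter, Multiset.count_filter,
    Multiset.count_filter]
  rcases lt_trichotomy (rk x.1) (rk x.2) with h | h | h
  · have h1 : x.1 ≠ x.2 := fun h' => by rw [h'] at h; exact lt_irrefl _ h
    rw [if_neg (by omega), if_neg h1, if_pos h]; omega
  · have h1 : x.1 = x.2 := hrk h
    rw [if_neg (by omega), if_pos h1, if_neg (by omega)]; omega
  · have h1 : x.1 ≠ x.2 := fun h' => by rw [h'] at h; exact lt_irrefl _ h
    rw [if_pos (by omega), if_neg h1, if_neg (by omega)]; omega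

lemma filter_all {α : Type} (P : α → Prop) [DecidablePred P] (a : Multiset α) (h : ∀ x ∈ a, P x) :
    a.filter P = a := Multiset.filter_eq_self.2 h

lemma filter_none {α : Type} (P : α → Prop) [DecidablePred P] (a : Multiset α)
    (h : ∀ x ∈ a, ¬ P x) : a.filter P = 0 := Multiset.filter_eq_nil.2 h

lemma ord3_add (a b c : Multiset (ι × ι)) (ha : ∀ x ∈ a, rk x.2 < rk x.1)
    (hb : ∀ x ∈ b, x.1 = x.2) (hc : ∀ x ∈ c, rk x.1 < rk x.2) :
    ord3 rk (a + (b + c)) = a.toList ++ (b.toList ++ c.toList) := by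
  unfold ord3
  simp only [Multiset.filter_add]
  rw [filter_all _ a ha, filter_none _ b (fun x hx => by rw [hb x hx]; exact lt_irrefl _),
    filter_none _ c (fun x hx => by have := hc x hx; omega),
    filter_none _ a (fun x hx h => by have := ha x hx; rw [h] at this; exact lt_irrefl _ this),
    filter_all _ b hb,
    filter_none _ c (fun x hx h => by have := hc x hx; rw [h] at this; exact lt_irrefl _ this),
    filter_none _ a (fun x hx => by have := ha x hx; omega),
    filter_none _ b (fun x hx => by rw [hb x hx]; exact lt_irrefl _), filter_all _ c hc]
  simp

lemma Adm_add (a b c : Multiset (ι × ι)) (ha : ∀ x ∈ a, rk x.2 < rk x.1)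
    (hb : ∀ x ∈ b, x.1 = x.2) (hc : ∀ x ∈ c, rk x.1 < rk x.2)
    (h1 : Adm p a) (h2 : Adm p b) (h3 : Adm p c) : Adm p (a + (b + c)) := by
  intro x hx
  rw [Multiset.count_add, Multiset.count_add]
  have e1 := h1 x hx
  have e2 := h2 x hx
  have e3 := h3 x hx
  by_cases xa : x ∈ a
  · have := ha x xa
    have xb : x ∉ b := fun h => by rw [hb x h] at this; exact lt_irrefl _ this
    have xc : x ∉ c := fun h => by have := hc x h; omega
    rw [Multiset.count_eq_zero.2 xb, Multiset.count_eq_zero.2 xc]; omega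
  · rw [Multiset.count_eq_zero.2 xa]
    by_cases xb : x ∈ b
    · have xc : x ∉ c := fun h => by have := hc x h; rw [hb x xb] at this; exact lt_irrefl _ this
      rw [Multiset.count_eq_zero.2 xc]; omega
    · rw [Multiset.count_eq_zero.2 xb]; omega

lemma Adm_mono {a b : Multiset (ι × ι)} (h : a ≤ b) (hb : Adm p b) : Adm p a := fun x hx =>
  (Multiset.count_le_of_le x h).trans (hb x hx)

variable (hrk : Function.Injective rk)

/-- The triangular PBW isomorphism. -/
def WE : ({β : Multiset (ι × ι) // Adm p β} →₀ ℂ) ≃ₗ[ℂ] UEA ι p :=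
  LinearEquiv.ofBijective (WW p (ord3 rk))
    ⟨WW_inj p _ (ord3_coe rk hrk), WW_surj p _ (ord3_coe rk hrk)⟩

/-- The monomial of a diagonal multiset. -/
def mo (β : Multiset (ι × ι)) : MvPolynomial ι ℂ := (β.map fun x => MvPolynomial.X x.1).prod

/-- The Harish-Chandra projection. -/
def chi : UEA ι p →ₗ[ℂ] MvPolynomial ι ℂ :=
  (Finsupp.linearCombination ℂ fun β : {β : Multiset (ι × ι) // Adm p β} =>
    if ∀ x ∈ β.1, x.1 = x.2 then mo β.1 else 0).comp (WE p rk hrk).symm.toLinearMap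

lemma chi_ord (β : Multiset (ι × ι)) (h : Adm p β) :
    chi p rk hrk (wd p (ord3 rk β)) = if ∀ x ∈ β, x.1 = x.2 then mo β else 0 := by
  have : wd p (ord3 rk β) = WE p rk hrk (Finsupp.single ⟨β, h⟩ 1) := by
    simp [WE, WW]
  rw [this, chi, LinearMap.comp_apply]
  erw [LinearEquiv.symm_apply_apply]
  simp

lemma U_ind (P : UEA ι p → Prop) (h0 : P 0) (ha : ∀ u v, P u → P v → P (u + v))
    (hs : ∀ (c : ℂ) u, P u → P (c • u)) (hrk : Function.Injective rk)
    (hw : ∀ β, Adm p β → P (wd p (ord3 rk β))) (u : UEA ι p) : P u := by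
  obtain ⟨c, rfl⟩ := WW_surj p _ (ord3_coe rk hrk) u
  induction c using Finsupp.induction_linear with
  | zero => rw [map_zero]; exact h0
  | add f g hf hg => rw [map_add]; exact ha _ _ hf hg
  | single β c =>
    have : WW p (ord3 rk) (Finsupp.single β c) = c • wd p (ord3 rk β.1) := by simp [WW]
    rw [this]; exact hs _ _ (hw _ β.2)

lemma chi_abc (a b c : Multiset (ι × ι)) (ha : ∀ x ∈ a, rk x.2 < rk x.1)
    (hb : ∀ x ∈ b, x.1 = x.2) (hc : ∀ x ∈ c, rk x.1 < rk x.2)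
    (h1 : Adm p a) (h2 : Adm p b) (h3 : Adm p c) (hne : a ≠ 0 ∨ c ≠ 0) :
    chi p rk hrk (wd p (a.toList ++ (b.toList ++ c.toList))) = 0 := by
  rw [← ord3_add rk a b c ha hb hc, chi_ord p rk hrk _ (Adm_add p rk a b c ha hb hc h1 h2 h3),
    if_neg]
  intro hall
  rcases hne with h | h
  · obtain ⟨x, hx⟩ := Multiset.exists_mem_of_ne_zero h
    have e1 := hall x (by simp [hx])
    have e2 := ha x hx
    rw [e1] at e2; exact lt_irrefl _ e2
  · obtain ⟨x, hx⟩ := Multiset.exists_mem_of_ne_zero h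
    have e1 := hall x (by simp [hx])
    have e2 := hc x hx
    rw [e1] at e2; exact lt_irrefl _ e2

lemma chi_lower (i j : ι) (hij : rk j < rk i) (u : UEA ι p) :
    chi p rk hrk (gen p i j * u) = 0 := by
  refine U_ind p rk (fun u => chi p rk hrk (gen p i j * u) = 0) ?_ ?_ ?_ hrk ?_ u
  · simp
  · intro u v hu hv; rw [mul_add, map_add, hu, hv, add_zero]
  · intro c u hu; rw [mul_smul_comm, map_smul, hu, smul_zero]
  · intro β hβ
    have h1 : gen p i j * wd p (ord3 rk β) =
        wd p ((i, j) :: (β.filter fun x => rk x.2 < rk x.1).toList) *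
          wd p ((β.filter fun x => x.1 = x.2).toList ++
            (β.filter fun x => rk x.1 < rk x.2).toList) := by
      rw [← wd_append, List.cons_append, wd_cons]; rfl
    rw [h1]
    have h2 := span_ord p (Q := fun x => rk x.2 < rk x.1) (fun i j k a b => lt_trans b a)
      Multiset.toList Multiset.coe_toList _ ((i, j) :: (β.filter fun x => rk x.2 < rk x.1).toList)
      le_rfl (by
        intro x hx
        rcases List.mem_cons.1 hx with rfl | hx
        · exact hij
        · exact (Multiset.mem_filter.1 (Multiset.mem_toList.1 hx)).2) (by simp)
    generalize wd p (_ :: _) = w0 at h2 ⊢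
    induction h2 using Submodule.span_induction with
    | mem w hw =>
      obtain ⟨γ, g1, g2, g3, rfl⟩ := hw
      rw [← wd_append]
      exact chi_abc p rk hrk _ _ _ g2 (fun x hx => (Multiset.mem_filter.1 hx).2)
        (fun x hx => (Multiset.mem_filter.1 hx).2) g1 (Adm_mono p (Multiset.filter_le _ _) hβ)
        (Adm_mono p (Multiset.filter_le _ _) hβ) (Or.inl g3)
    | zero => simp
    | add x y _ _ hx hy => rw [add_mul, map_add, hx, hy, add_zero]
    | smul c x _ hx => rw [smul_mul_assoc, map_smul, hx, smul_zero]

lemma chi_upper (i j : ι) (hij : rk i < rk j) (u : UEA ι p) :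
    chi p rk hrk (u * gen p i j) = 0 := by
  refine U_ind p rk (fun u => chi p rk hrk (u * gen p i j) = 0) ?_ ?_ ?_ hrk ?_ u
  · simp
  · intro u v hu hv; rw [add_mul, map_add, hu, hv, add_zero]
  · intro c u hu; rw [smul_mul_assoc, map_smul, hu, smul_zero]
  · intro β hβ
    have h1 : wd p (ord3 rk β) * gen p i j =
        wd p ((β.filter fun x => rk x.2 < rk x.1).toList ++ (β.filter fun x => x.1 = x.2).toList) *
          wd p ((β.filter fun x => rk x.1 < rk x.2).toList ++ [(i, j)]) := by
      rw [ord3, wd_append, wd_append, wd_append, wd_append, wd_cons, wd_nil, mul_one]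
      simp only [mul_assoc]
    rw [h1]
    have h2 := span_ord p (Q := fun x => rk x.1 < rk x.2) (fun i j k a b => lt_trans a b)
      Multiset.toList Multiset.coe_toList _ ((β.filter fun x => rk x.1 < rk x.2).toList ++ [(i, j)])
      le_rfl (by
        intro x hx
        rcases List.mem_append.1 hx with hx | hx
        · exact (Multiset.mem_filter.1 (Multiset.mem_toList.1 hx)).2
        · rw [List.mem_singleton.1 hx]; exact hij) (by simp)
    generalize wd p ((β.filter fun x => rk x.1 < rk x.2).toList ++ [(i, j)]) = w0 at h2 ⊢
    induction h2 using Submodule.span_induction with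
    | mem w hw =>
      obtain ⟨γ, g1, g2, g3, rfl⟩ := hw
      rw [← wd_append, List.append_assoc]
      exact chi_abc p rk hrk _ _ _ (fun x hx => (Multiset.mem_filter.1 hx).2)
        (fun x hx => (Multiset.mem_filter.1 hx).2) g2 (Adm_mono p (Multiset.filter_le _ _) hβ)
        (Adm_mono p (Multiset.filter_le _ _) hβ) g1 (Or.inr g3)
    | zero => simp
    | add x y _ _ hx hy => rw [mul_add, map_add, hx, hy, add_zero]
    | smul c x _ hx => rw [mul_smul_comm, map_smul, hx, smul_zero]

lemma chi_TTs (u : UEA ι p) (hu : u ∈ TTs p rk) : chi p rk hrk u = 0 := by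
  have : TTs p rk ≤ LinearMap.ker (chi p rk hrk) := by
    apply Submodule.span_le.2
    rintro _ (⟨i, j, A, hij, rfl⟩ | ⟨i, j, A, hij, rfl⟩)
    · exact chi_lower p rk hrk i j hij A
    · exact chi_upper p rk hrk i j hij A
  exact this hu

lemma ord3_TTs (hrk : Function.Injective rk) (β : Multiset (ι × ι))
    (h : ¬ ∀ x ∈ β, x.1 = x.2) : wd p (ord3 rk β) ∈ TTs p rk := by
  by_cases hl : (β.filter fun x => rk x.2 < rk x.1) = 0
  · by_cases hu : (β.filter fun x => rk x.1 < rk x.2) = 0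
    · exfalso
      apply h
      intro x hx
      have e1 := Multiset.filter_eq_nil.1 hl x hx
      have e2 := Multiset.filter_eq_nil.1 hu x hx
      exact hrk (by omega)
    · have hne : (β.filter fun x => rk x.1 < rk x.2).toList ≠ [] := by simpa using hu
      have hlast := List.getLast_mem hne
      apply Submodule.subset_span
      right
      refine ⟨_, _, wd p ((β.filter fun x => rk x.2 < rk x.1).toList ++
        ((β.filter fun x => x.1 = x.2).toList ++
          (β.filter fun x => rk x.1 < rk x.2).toList.dropLast)),
        (Multiset.mem_filter.1 (Multiset.mem_toList.1 hlast)).2, ?_⟩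
      rw [ord3]
      conv_lhs => rw [← List.dropLast_append_getLast hne]
      rw [← List.append_assoc, ← List.append_assoc, wd_append, wd_cons, wd_nil, mul_one,
        List.append_assoc]
  · have hne : (β.filter fun x => rk x.2 < rk x.1).toList ≠ [] := by simpa using hl
    obtain ⟨x, t, ht⟩ := List.exists_cons_of_ne_nil hne
    have hx : x ∈ (β.filter fun x => rk x.2 < rk x.1).toList := by rw [ht]; simp
    apply Submodule.subset_span
    left
    refine ⟨x.1, x.2, wd p (t ++ ((β.filter fun x => x.1 = x.2).toList ++
      (β.filter fun x => rk x.1 < rk x.2).toList)),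
      (Multiset.mem_filter.1 (Multiset.mem_toList.1 hx)).2, ?_⟩
    rw [ord3, ht, List.cons_append, wd_cons]

/-- A section of the Harish-Chandra projection. -/
def sig : MvPolynomial ι ℂ →ₗ[ℂ] UEA ι p :=
  (MvPolynomial.basisMonomials ι ℂ).constr ℂ fun s =>
    wd p (ord3 rk (s.toMultiset.map fun i => (i, i)))

lemma mo_eq (β : Multiset (ι × ι)) :
    mo β = MvPolynomial.monomial (Multiset.toFinsupp (β.map Prod.fst)) 1 := by
  induction β using Multiset.induction with
  | empty => simp [mo]
  | cons x β ih =>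
    rw [mo, Multiset.map_cons, Multiset.prod_cons, ← mo, ih, Multiset.map_cons,
      ← Multiset.singleton_add, map_add, Multiset.toFinsupp_singleton, MvPolynomial.X,
      MvPolynomial.monomial_mul, one_mul]

lemma sig_mo (β : Multiset (ι × ι)) (h : ∀ x ∈ β, x.1 = x.2) :
    sig p rk (mo β) = wd p (ord3 rk β) := by
  rw [mo_eq, sig, ← congrFun (MvPolynomial.coe_basisMonomials ι ℂ) _, Module.Basis.constr_basis,
    Multiset.toFinsupp_toMultiset, Multiset.map_map]
  congr 2
  conv_rhs => rw [← Multiset.map_id β]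
  apply Multiset.map_congr rfl
  intro x hx
  ext
  · rfl
  · exact h x hx

lemma sub_sig (u : UEA ι p) : ∃ t ∈ TTs p rk, u = t + sig p rk (chi p rk hrk u) := by
  refine U_ind p rk (fun u => ∃ t ∈ TTs p rk, u = t + sig p rk (chi p rk hrk u)) ?_ ?_ ?_ hrk ?_ u
  · exact ⟨0, zero_mem _, by simp⟩
  · rintro u v ⟨t, ht, hu⟩ ⟨t', ht', hv⟩
    refine ⟨t + t', add_mem ht ht', ?_⟩
    rw [map_add, map_add]
    nth_rewrite 1 [hu]
    nth_rewrite 1 [hv]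
    exact add_add_add_comm _ _ _ _
  · rintro c u ⟨t, ht, hu⟩
    refine ⟨c • t, Submodule.smul_mem _ _ ht, ?_⟩
    rw [map_smul, map_smul, ← smul_add, ← hu]
  · intro β hβ
    rw [chi_ord p rk hrk β hβ]
    split_ifs with h
    · exact ⟨0, zero_mem _, by rw [sig_mo p rk β h, zero_add]⟩
    · exact ⟨_, ord3_TTs p rk hrk β h, by rw [map_zero, add_zero]⟩

lemma mem_TTs_of_chi (u : UEA ι p) (h : chi p rk hrk u = 0) : u ∈ TTs p rk := by
  obtain ⟨t, ht, hu⟩ := sub_sig p rk hrk u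
  rw [h, map_zero, add_zero] at hu
  rw [hu]; exact ht

lemma diag_comm (i k : ι) : gen p i i * gen p k k = gen p k k * gen p i i := by
  have h := gen_rel p i i k k
  have hs : ((-1 : ℂ) ^ ((p i + p i) * (p k + p k))) = 1 :=
    Even.neg_one_pow ((Even.mul_right ⟨p i, rfl⟩ _))
  rw [h, hs]
  by_cases hik : i = k
  · subst hik; simp
  · simp [hik, Ne.symm hik]

lemma wd_diag (l : List (ι × ι)) (h : ∀ x ∈ l, x.1 = x.2) (hrk : Function.Injective rk) :
    wd p l = wd p (ord3 rk l) := by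
  have hp : l.Perm (ord3 rk l) := by rw [← Multiset.coe_eq_coe, ord3_coe rk hrk]
  unfold wd
  apply List.Perm.prod_eq' (hp.map _)
  rw [List.pairwise_map]
  apply List.Pairwise.imp_of_mem (R := fun _ _ => True)
  · intro a b ha hb _
    change _ * _ = _ * _
    rw [← h a ha, ← h b hb]
    exact diag_comm p _ _
  · exact List.pairwise_of_forall (fun _ _ => trivial)

lemma Adm_diag (β : Multiset (ι × ι)) (h : ∀ x ∈ β, x.1 = x.2) : Adm p β := by
  intro x hx
  by_cases hm : x ∈ β
  · exfalso
    unfold lpar at hx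
    rw [h x hm] at hx
    exact (Nat.not_odd_iff_even.2 ⟨_, rfl⟩) hx
  · rw [Multiset.count_eq_zero.2 hm]; omega

lemma chi_diag (l : List (ι × ι)) (h : ∀ x ∈ l, x.1 = x.2) : chi p rk hrk (wd p l) = mo (l : Multiset (ι × ι)) := by
  rw [wd_diag p rk l h hrk, chi_ord p rk hrk _ (Adm_diag p _ (by simpa using h)), if_pos (by simpa using h)]

lemma TTs_mul (k : ι) (u : UEA ι p) (hu : u ∈ TTs p rk) : u * gen p k k ∈ TTs p rk := by
  unfold TTs at hu
  induction hu using Submodule.span_induction with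
  | mem w hw =>
    rcases hw with ⟨i, j, A, hij, rfl⟩ | ⟨i, j, A, hij, rfl⟩
    · rw [mul_assoc]
      exact Submodule.subset_span (Or.inl ⟨i, j, _, hij, rfl⟩)
    · have hmem : ∀ B, B * gen p i j ∈ TTs p rk := fun B =>
        Submodule.subset_span (Or.inr ⟨i, j, _, hij, rfl⟩)
      have hs : ((-1 : ℂ) ^ ((p i + p j) * (p k + p k))) = 1 :=
        Even.neg_one_pow ((Even.mul_left ⟨p k, rfl⟩ _))
      rw [mul_assoc, gen_rel p i j k k, hs, one_smul, one_smul, mul_add, mul_sub, ← mul_assoc]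
      refine add_mem (hmem _) (sub_mem ?_ ?_)
      · split_ifs with h
        · subst h; exact hmem _
        · rw [mul_zero]; exact zero_mem _
      · split_ifs with h
        · subst h; exact hmem _
        · rw [mul_zero]; exact zero_mem _
  | zero => rw [zero_mul]; exact zero_mem _
  | add x y _ _ hx hy => rw [add_mul]; exact add_mem hx hy
  | smul c x _ hx => rw [smul_mul_assoc]; exact Submodule.smul_mem _ _ hx

lemma chi_mul_diag (k : ι) (u : UEA ι p) :
    chi p rk hrk (u * gen p k k) = chi p rk hrk u * MvPolynomial.X k := by
  refine U_ind p rk (fun u => chi p rk hrk (u * gen p k k) = chi p rk hrk u * MvPolynomial.X k)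
    ?_ ?_ ?_ hrk ?_ u
  · simp
  · intro u v hu hv; rw [add_mul, map_add, hu, hv, map_add, add_mul]
  · intro c u hu; rw [smul_mul_assoc, map_smul, hu, map_smul, smul_mul_assoc]
  · intro β hβ
    by_cases h : ∀ x ∈ β, x.1 = x.2
    · have hl : ∀ x ∈ ord3 rk β, x.1 = x.2 := by
        intro x hx
        apply h
        rw [← ord3_coe rk hrk β]; exact hx
      have h1 : wd p (ord3 rk β) * gen p k k = wd p (ord3 rk β ++ [(k, k)]) := by
        rw [wd_append, wd_cons, wd_nil, mul_one]
      rw [h1, chi_diag, chi_diag _ _ _ _ hl]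
      · rw [← Multiset.coe_add, mo, mo]; simp
      · intro x hx
        rcases List.mem_append.1 hx with hx | hx
        · exact hl x hx
        · rw [List.mem_singleton.1 hx]
    · have hT := ord3_TTs p rk hrk β h
      rw [chi_TTs p rk hrk _ hT, chi_TTs p rk hrk _ (TTs_mul p rk k _ hT), zero_mul]

/-- The left ideal defining the Verma module. -/
def JJ (lam : ι → ℂ) : Submodule ℂ (UEA ι p) :=
  Submodule.span ℂ ({M | ∃ i j A, rk i < rk j ∧ M = A * gen p i j} ∪
      {M | ∃ i A, M = A * gen p i i - lam i • A} : Set (UEA ι p))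

lemma JJ_mul (lam : ι → ℂ) (a u : UEA ι p) (hu : u ∈ JJ p rk lam) : a * u ∈ JJ p rk lam := by
  unfold JJ at hu
  induction hu using Submodule.span_induction with
  | mem w hw =>
    rcases hw with ⟨i, j, A, hij, rfl⟩ | ⟨i, A, rfl⟩
    · rw [← mul_assoc]
      exact Submodule.subset_span (Or.inl ⟨i, j, _, hij, rfl⟩)
    · rw [mul_sub, ← mul_assoc, mul_smul_comm]
      exact Submodule.subset_span (Or.inr ⟨i, _, rfl⟩)
  | zero => rw [mul_zero]; exact zero_mem _
  | add x y _ _ hx hy => rw [mul_add]; exact add_mem hx hy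
  | smul c x _ hx => rw [mul_smul_comm]; exact Submodule.smul_mem _ _ hx

lemma JJ_chi (lam : ι → ℂ) (u : UEA ι p) (hu : u ∈ JJ p rk lam) :
    MvPolynomial.eval lam (chi p rk hrk u) = 0 := by
  unfold JJ at hu
  induction hu using Submodule.span_induction with
  | mem w hw =>
    rcases hw with ⟨i, j, A, hij, rfl⟩ | ⟨i, A, rfl⟩
    · rw [chi_upper p rk hrk i j hij, map_zero]
    · rw [map_sub, map_smul, chi_mul_diag, map_sub, MvPolynomial.smul_eval, map_mul,
        MvPolynomial.eval_X, mul_comm, sub_self]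
  | zero => simp
  | add x y _ _ hx hy => rw [map_add, map_add, hx, hy, add_zero]
  | smul c x _ hx => rw [map_smul, MvPolynomial.smul_eval, hx, mul_zero]

lemma one_not_JJ (hrk : Function.Injective rk) (lam : ι → ℂ) : (1 : UEA ι p) ∉ JJ p rk lam := by
  intro h
  have h1 := JJ_chi p rk hrk lam _ h
  rw [← wd_nil p, chi_diag _ _ _ _ (by simp)] at h1
  simp [mo] at h1

end HCb

section quo
variable {A : Type} [Ring A] [Algebra ℂ A] (J : Submodule ℂ A) (hJ : ∀ a u, u ∈ J → a * u ∈ J)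

/-- Left multiplication on the quotient by a left ideal. -/
def qrep : A →ₐ[ℂ] Module.End ℂ (A ⧸ J) where
  toFun a := J.mapQ J (LinearMap.mulLeft ℂ a) (fun u hu => hJ a u hu)
  map_one' := by ext x; simp
  map_mul' a b := by
    ext x
    exact congrArg (Submodule.Quotient.mk (p := J)) (mul_assoc a b x)
  map_zero' := by ext x; simp
  map_add' a b := by
    ext x
    exact congrArg (Submodule.Quotient.mk (p := J)) (add_mul a b x)
  commutes' r := by ext x; simp [Algebra.algebraMap_eq_smul_one]

lemma qrep_mk (a u : A) : qrep J hJ a (Submodule.Quotient.mk u) = Submodule.Quotient.mk (a * u) := rfl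
end quo

/-- Rank of an index. -/
def rkI {m n : ℕ} : Ind m n → ℕ := Sum.elim (fun a => a.1) (fun b => m + b.1)

lemma rkI_inj {m n : ℕ} : Function.Injective (rkI (m := m) (n := n)) := by
  rintro (a | a) (b | b) h
  · exact congrArg Sum.inl (Fin.ext h)
  · have h' : a.1 = m + b.1 := h
    have := a.2; omega
  · have h' : m + a.1 = b.1 := h
    have := b.2; omega
  · have h' : m + a.1 = m + b.1 := h
    exact congrArg Sum.inr (Fin.ext (by omega))

lemma iltI_iff {m n : ℕ} (i j : Ind m n) : iltI i j ↔ rkI i < rkI j := by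
  rcases i with a | a <;> rcases j with b | b
  · exact Iff.rfl
  · have := a.2
    exact ⟨fun _ => by change a.1 < m + b.1; omega, fun _ => trivial⟩
  · have := b.2
    refine ⟨fun h => h.elim, fun h => ?_⟩
    have h' : m + a.1 < b.1 := h
    omega
  · change a.1 < b.1 ↔ m + a.1 < m + b.1
    omega

/-- The lift of a representation vector to the quotient. -/
lemma qlift {A : Type} [Ring A] [Algebra ℂ A] (J : Submodule ℂ A)
    (hJ : ∀ a u, u ∈ J → a * u ∈ J) {W : Type} [AddCommGroup W] [Module ℂ W]
    (ρ : A →ₐ[ℂ] Module.End ℂ W) (w : W) (h : ∀ u ∈ J, ρ u w = 0) :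
    ∃ g : (A ⧸ J) →ₗ[ℂ] W, g (Submodule.Quotient.mk 1) = w ∧
      ∀ u x, g (qrep J hJ u x) = ρ u (g x) := by
  refine ⟨J.liftQ ((LinearMap.applyₗ w).comp ρ.toLinearMap) (fun u hu => h u hu), ?_, ?_⟩
  · change ρ 1 w = w
    rw [map_one]; rfl
  · intro u x
    obtain ⟨x, rfl⟩ := Submodule.Quotient.mk_surjective _ x
    change ρ (u * x) w = ρ u (ρ x w)
    rw [map_mul]; rfl

/-- The Verma module. -/
def theVerma (m n : ℕ) (lam : Ind m n → ℂ) : VermaM m n lam where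
  L := UEA (Ind m n) pI ⧸ JJ pI rkI lam
  ρ := qrep (JJ pI rkI lam) (JJ_mul pI rkI lam)
  v := Submodule.Quotient.mk 1
  v_ne := fun h => one_not_JJ pI rkI rkI_inj lam ((Submodule.Quotient.mk_eq_zero _).1 h)
  hw := fun i j hij => by
    rw [qrep_mk, Submodule.Quotient.mk_eq_zero]
    rw [mul_one]
    exact Submodule.subset_span (Or.inl ⟨i, j, 1, (iltI_iff i j).1 hij, (one_mul _).symm⟩)
  hwt := fun i => by
    rw [qrep_mk, ← Submodule.Quotient.mk_smul, Submodule.Quotient.eq]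
    rw [mul_one]
    exact Submodule.subset_span (Or.inr ⟨i, 1, by rw [one_mul]⟩)
  gens := fun N hN hv => by
    rw [eq_top_iff]
    rintro x -
    obtain ⟨x, rfl⟩ := Submodule.Quotient.mk_surjective _ x
    have := hN x _ hv
    rw [qrep_mk, mul_one] at this
    exact this
  univ := fun W _ _ ρW w h1 h2 => by
    apply qlift
    intro u hu
    unfold JJ at hu
    induction hu using Submodule.span_induction with
    | mem x hx =>
      rcases hx with ⟨i, j, A, hij, rfl⟩ | ⟨i, A, rfl⟩
      · rw [map_mul, Module.End.mul_apply, h1 i j ((iltI_iff i j).2 hij), map_zero]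
      · rw [map_sub, map_mul, map_smul, LinearMap.sub_apply, Module.End.mul_apply, h2, map_smul,
          LinearMap.smul_apply, sub_self]
    | zero => rw [map_zero]; rfl
    | add x y _ _ hx hy => rw [map_add, LinearMap.add_apply, hx, hy, add_zero]
    | smul c x _ hx => rw [map_smul, LinearMap.smul_apply, hx, smul_zero]

/-- A Zariski dense product set of weights. -/
def Sk {m n : ℕ} (k : Ind m n) : Set ℂ :=
  Set.range fun N : ℕ => (N : ℂ) + ((rkI k + 1 : ℕ) : ℂ) * Complex.I

lemma Sk_inf {m n : ℕ} (k : Ind m n) : (Sk k).Infinite := by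
  apply Set.infinite_range_of_injective
  intro a b h
  simpa using h

lemma Sk_im {m n : ℕ} {k : Ind m n} {c : ℂ} (h : c ∈ Sk k) : c.im = rkI k + 1 := by
  obtain ⟨N, rfl⟩ := h
  simp

lemma rhoS_im {m n : ℕ} (k : Ind m n) : (rhoS k).im = 0 := by
  rcases k with a | a <;> simp [rhoS]

lemma AW_of_Sk {m n : ℕ} (lam : Ind m n → ℂ) (h : ∀ k, lam k ∈ Sk k) :
    Antidom lam ∧ Typical lam ∧ ∀ i : Ind m n, ¬∃ k : ℤ, lam i = (k : ℂ) := by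
  have him : ∀ k, (lam k).im = rkI k + 1 := fun k => Sk_im (h k)
  refine ⟨⟨?_, ?_⟩, ?_, ?_⟩
  · rintro i j hij ⟨N, hN⟩
    have := congrArg Complex.im hN
    simp [him, rhoS_im, rkI] at this
    have h1 : i.1 < j.1 := hij
    have h2 : (i.1 : ℝ) < j.1 := by exact_mod_cast h1
    linarith
  · rintro i j hij ⟨N, hN⟩
    have := congrArg Complex.im hN
    simp [him, rhoS_im, rkI] at this
    have h1 : i.1 < j.1 := hij
    have h2 : (i.1 : ℝ) < j.1 := by exact_mod_cast h1
    linarith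
  · intro i j hN
    have := congrArg Complex.im hN
    simp only [Complex.add_im, him, rhoS_im, Complex.zero_im] at this
    have h1 : (0 : ℝ) ≤ rkI (Sum.inl i : Ind m n) := Nat.cast_nonneg _
    have h2 : (0 : ℝ) ≤ rkI (Sum.inr j : Ind m n) := Nat.cast_nonneg _
    linarith
  · rintro i ⟨k, hk⟩
    have := congrArg Complex.im hk
    simp only [him, Complex.intCast_im] at this
    have h1 : (0 : ℝ) ≤ rkI i := Nat.cast_nonneg _
    linarith

/-- Lemma 5.1.  The `D'(m|n)`-module `F = ⊕_{a∈ℤ} F_a` is faithful, and any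
central element of `U(gl(m|n))` annihilating `⊕_{λ∈AW_{m|n}} M(λ)` is zero. -/
theorem stmt10 (m n : ℕ) :
    (∀ d : Dprime m n,
      (∀ f : FSp m n, (d : Module.End ℂ (FSp m n)) f = 0) → d = 0) ∧
    (∀ z : UEA (Ind m n) pI, z ∈ Subalgebra.center ℂ (UEA (Ind m n) pI) →
      (∀ lam : Ind m n → ℂ, Antidom lam → Typical lam →
        (∀ i : Ind m n, ¬∃ k : ℤ, lam i = (k : ℂ)) →
        ∀ (V : VermaM m n lam) (x : V.L), V.ρ z x = 0) →
      z = 0) := by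

  refine ⟨fun d hd => Subtype.ext (LinearMap.ext hd), fun z hz h => ?_⟩
  apply HC_inj pI rkI z (fun u => (Subalgebra.mem_center_iff.1 hz u))
  apply mem_TTs_of_chi pI rkI rkI_inj
  apply MvPolynomial.funext_set Sk Sk_inf
  intro lam hlam
  obtain ⟨h1, h2, h3⟩ := AW_of_Sk lam (fun k => hlam k (Set.mem_univ k))
  have h4 := h lam h1 h2 h3 (theVerma m n lam) (theVerma m n lam).v
  have h5 : Submodule.Quotient.mk (p := JJ pI rkI lam) (z * 1) = 0 := h4
  rw [mul_one, Submodule.Quotient.mk_eq_zero] at h5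
  rw [map_zero]
  exact JJ_chi pI rkI rkI_inj lam z h5
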